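/- arXiv:math/0601188 — 5 statements merged into one kernel-verified Lean document; each statement's English description precedes it below -/
import Mathlib

section
/- Let f ∈ C₀(ℝ, ℂ) with f ≠ 0. Then the smallest norm-closed star-subalgebra of C₀(ℝ, ℂ) containing every translate x ↦ f(x − t) of f (for all t ∈ ℝ) is equal to C₀(ℝ, ℂ). -/
open ZeroAtInfty

/-!
Let `A` be the star-subalgebra generated by the translates of `f`. If every function in `A` took
equal values at two points `x` and `y`, then `x - y` would be a period of `f`. The periods of a
nonzero `f ∈ C₀(G)` form a compact subgroup: it is closed, and a translate of it lies in a nonempty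
level set `{f = c}` with `c ≠ 0`, which is compact. As `ℝ` has no nontrivial compact subgroup, `A`
separates points, and it vanishes nowhere because the translates of `f` have no common zero.

The Stone–Weierstrass theorem on the one-point compactification then shows that `A + ℂ1` is dense
in `C(ℝ ∪ {∞}, ℂ)`. Subtracting `F(∞) • 1` from the approximants `F`, density passes to the kernel
of evaluation at `∞`, which meets `A + ℂ1` in `A` and is isometric to `C₀(ℝ, ℂ)`.
-/

open Filter Topology

section OnePointExtension

variable {X R : Type*} [TopologicalSpace X] [R1Space X]

section CommRing

variable [CommRing R] [StarRing R] [TopologicalSpace R] [IsTopologicalRing R] [ContinuousStar R]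

/-- The embedding of `C₀(X, R)` into the continuous functions on the one-point compactification of
`X` which sends a function to its extension by `0` at infinity. -/
def onePointExtension : C₀(X, R) →⋆ₙₐ[R] C(OnePoint X, R) where
  toFun f := OnePoint.continuousMapMk f.toContinuousMap 0 <| by
    rw [coclosedCompact_eq_cocompact]
    exact f.zero_at_infty'
  map_smul' c f := by ext x; cases x <;> simp [OnePoint.continuousMapMk]
  map_zero' := by ext x; cases x <;> rfl
  map_add' f g := by ext x; cases x <;> simp [OnePoint.continuousMapMk]
  map_mul' f g := by ext x; cases x <;> simp [OnePoint.continuousMapMk]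
  map_star' f := by ext x; cases x <;> simp [OnePoint.continuousMapMk]

@[simp]
lemma onePointExtension_coe (f : C₀(X, R)) (x : X) : onePointExtension f x = f x := rfl

@[simp]
lemma onePointExtension_infty (f : C₀(X, R)) : onePointExtension f OnePoint.infty = 0 := rfl

lemma range_onePointExtension :
    Set.range (onePointExtension : C₀(X, R) → C(OnePoint X, R)) =
      RingHom.ker (ContinuousMap.evalStarAlgHom R R (OnePoint.infty : OnePoint X)) := by
  refine Set.Subset.antisymm (Set.range_subset_iff.2 fun f ↦ onePointExtension_infty f) ?_
  intro F (hF : F OnePoint.infty = 0)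
  have hF_lim : Tendsto (fun x : X ↦ F x) (cocompact X) (𝓝 0) := by
    rw [← coclosedCompact_eq_cocompact, ← hF]
    exact OnePoint.continuousAt_infty'.1 F.continuous.continuousAt
  refine ⟨⟨F.comp ⟨_, OnePoint.continuous_coe⟩, hF_lim⟩, ?_⟩
  ext x
  cases x with
  | infty => exact hF.symm
  | coe x => rfl

end CommRing

lemma isometry_onePointExtension [NormedCommRing R] [StarRing R] [ContinuousStar R] :
    Isometry (onePointExtension : C₀(X, R) → C(OnePoint X, R)) := by
  refine Isometry.of_dist_eq fun f g ↦ le_antisymm ?_ ?_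
  · refine (ContinuousMap.dist_le dist_nonneg).2 <| OnePoint.forall.2 ⟨by simp, fun x ↦ ?_⟩
    exact BoundedContinuousFunction.dist_coe_le_dist (f := f.toBCF) (g := g.toBCF) x
  · rw [← ZeroAtInftyContinuousMap.dist_toBCF_eq_dist,
      BoundedContinuousFunction.dist_le dist_nonneg]
    exact fun x ↦
      ContinuousMap.dist_apply_le_dist (f := onePointExtension f) (g := onePointExtension g) x

end OnePointExtension

lemma starAlgebra_adjoin_inter_ker {R B : Type*} [CommRing R] [StarRing R] [Ring B] [StarRing B]
    [Algebra R B] [StarModule R B] (φ : B →⋆ₐ[R] R) (A : NonUnitalStarSubalgebra R B)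
    (hA : ∀ a ∈ A, φ a = 0) :
    (StarAlgebra.adjoin R (A : Set B) : Set B) ∩ RingHom.ker φ = A := by
  refine Set.Subset.antisymm ?_ fun a ha ↦ ⟨StarAlgebra.subset_adjoin R _ ha, hA a ha⟩
  rintro b ⟨hb, hφb : φ b = 0⟩
  rw [← NonUnitalStarSubalgebra.unitization_range] at hb
  obtain ⟨u, rfl⟩ := hb
  have hu : u.fst = 0 := by
    simpa [NonUnitalStarSubalgebra.unitization_apply, hA _ u.snd.2, AlgHomClass.commutes]
      using hφb
  simp [NonUnitalStarSubalgebra.unitization_apply, hu]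

section StoneWeierstrass

variable {X 𝕜 : Type*} [TopologicalSpace X] [RCLike 𝕜]

lemma subalgebra_separatesPoints_of_onePointExtension_mem [R1Space X] {A : Set C₀(X, 𝕜)}
    {B : Subalgebra 𝕜 C(OnePoint X, 𝕜)} (hAB : ∀ a ∈ A, onePointExtension a ∈ B)
    (hsep : ((⇑) '' A).SeparatesPoints) (hne : ∀ x, ∃ a ∈ A, a x ≠ 0) : B.SeparatesPoints := by
  intro p q hpq
  cases p with
  | infty =>
    obtain ⟨y, rfl⟩ := OnePoint.ne_infty_iff_exists.1 hpq.symm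
    obtain ⟨a, ha, hay⟩ := hne y
    exact ⟨_, ⟨_, hAB a ha, rfl⟩, hay.symm⟩
  | coe x =>
    cases q with
    | infty =>
      obtain ⟨a, ha, hax⟩ := hne x
      exact ⟨_, ⟨_, hAB a ha, rfl⟩, hax⟩
    | coe y =>
      obtain ⟨_, ⟨a, ha, rfl⟩, haxy⟩ := hsep (ne_of_apply_ne _ hpq)
      exact ⟨_, ⟨_, hAB a ha, rfl⟩, haxy⟩

theorem nonUnitalStarSubalgebra_topologicalClosure_eq_top_of_separatesPoints
    (A : NonUnitalStarSubalgebra 𝕜 C₀(X, 𝕜))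
    (hsep : ((⇑) '' (A : Set C₀(X, 𝕜))).SeparatesPoints) (hne : ∀ x, ∃ a ∈ A, a x ≠ 0) :
    A.topologicalClosure = ⊤ := by
  have : T2Space X := ⟨fun x y hxy ↦ by
    obtain ⟨_, ⟨a, -, rfl⟩, haxy⟩ := hsep hxy
    exact separated_by_continuous (map_continuous a) haxy⟩
  let ι : C₀(X, 𝕜) →⋆ₙₐ[𝕜] C(OnePoint X, 𝕜) := onePointExtension
  let B : StarSubalgebra 𝕜 C(OnePoint X, 𝕜) := StarAlgebra.adjoin 𝕜 (A.map ι : Set _)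
  let φ := ContinuousMap.evalStarAlgHom 𝕜 𝕜 (OnePoint.infty : OnePoint X)
  have hB : closure (B : Set C(OnePoint X, 𝕜)) = Set.univ :=
    congrArg SetLike.coe <|
      ContinuousMap.starSubalgebra_topologicalClosure_eq_top_of_separatesPoints B
        (subalgebra_separatesPoints_of_onePointExtension_mem
          (fun a ha ↦ StarAlgebra.subset_adjoin 𝕜 _ ⟨a, ha, rfl⟩) hsep hne)
  have hker : (B : Set C(OnePoint X, 𝕜)) ∩ RingHom.ker φ = ι '' A :=
    starAlgebra_adjoin_inter_ker φ (A.map ι) <| by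
      rintro _ ⟨a, -, rfl⟩
      exact onePointExtension_infty a
  have hclosure : closure (ι '' A) = Set.range ι := by
    rw [← hker, ContinuousMap.AlgHom.closure_ker_inter φ (continuous_eval_const _) B, hB,
      Set.univ_inter, range_onePointExtension]
  apply SetLike.coe_injective
  change closure (A : Set C₀(X, 𝕜)) = Set.univ
  rw [isometry_onePointExtension.isUniformInducing.isInducing.closure_eq_preimage_closure_image,
    hclosure, Set.preimage_range]

end StoneWeierstrass

lemma isCompact_preimage_singleton_of_ne_zero {X β : Type*} [TopologicalSpace X]
    [TopologicalSpace β] [T1Space β] [Zero β] (f : C₀(X, β)) {y : β} (hy : y ≠ 0) :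
    IsCompact (f ⁻¹' {y}) := by
  have hcocompact : (f ⁻¹' {y})ᶜ ∈ cocompact X :=
    f.zero_at_infty' (isOpen_compl_singleton.mem_nhds hy.symm)
  obtain ⟨K, hK, hKf⟩ := mem_cocompact.1 hcocompact
  exact hK.of_isClosed_subset (isClosed_singleton.preimage (map_continuous f))
    (Set.compl_subset_compl.1 hKf)

section Periods

variable {G β : Type*} [AddGroup G]

/-- The additive subgroup of left periods of a function `f` on an additive, not necessarily
commutative, group. -/
def leftPeriods (f : G → β) : AddSubgroup G where
  carrier := {c | ∀ x, f (c + x) = f x}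
  zero_mem' x := by rw [zero_add]
  add_mem' {c d} hc hd x := by rw [add_assoc, hc, hd]
  neg_mem' {c} hc x := by rw [← hc, add_neg_cancel_left]

variable [TopologicalSpace G] [SeparatelyContinuousAdd G] [TopologicalSpace β] [T2Space β]

lemma isClosed_leftPeriods {f : G → β} (hf : Continuous f) :
    IsClosed (leftPeriods f : Set G) := by
  have hInter : (leftPeriods f : Set G) = ⋂ x, {c | f (c + x) = f x} :=
    Set.ofPred_forall fun x c ↦ f (c + x) = f x
  rw [hInter]
  exact isClosed_iInter fun x ↦ isClosed_eq (by fun_prop) continuous_const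

lemma isCompact_leftPeriods [Zero β] {f : C₀(G, β)} (hf : f ≠ 0) :
    IsCompact (leftPeriods f : Set G) := by
  obtain ⟨x, hx⟩ : ∃ x, f x ≠ 0 := DFunLike.ne_iff.1 hf
  have hcompact : IsCompact ((· + x) ⁻¹' (f ⁻¹' {f x})) :=
    (Homeomorph.addRight x).isCompact_preimage.2 (isCompact_preimage_singleton_of_ne_zero f hx)
  exact hcompact.of_isClosed_subset (isClosed_leftPeriods (map_continuous f)) fun c hc ↦ hc x

end Periods

section Translates

variable {G β : Type*} [AddGroup G] [TopologicalSpace G] [SeparatelyContinuousAdd G]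
  [TopologicalSpace β] [Zero β]

/-- The translate `x ↦ f (x - t)` of `f ∈ C₀(G, β)`, again as an element of `C₀(G, β)`. -/
def zeroAtInftyTranslate (t : G) (f : C₀(G, β)) : C₀(G, β) :=
  f.comp (Homeomorph.addRight (-t)).toCocompactMap

lemma zeroAtInftyTranslate_apply (t : G) (f : C₀(G, β)) (x : G) :
    zeroAtInftyTranslate t f x = f (x - t) :=
  congrArg f (sub_eq_add_neg x t).symm

lemma sub_mem_leftPeriods_of_zeroAtInftyTranslate_eq {f : C₀(G, β)} {x y : G}
    (h : ∀ t, zeroAtInftyTranslate t f x = zeroAtInftyTranslate t f y) : x - y ∈ leftPeriods f := by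
  intro z
  simpa [zeroAtInftyTranslate_apply, sub_eq_add_neg, neg_add_rev, add_assoc] using h (-z + y)

lemma exists_zeroAtInftyTranslate_apply_ne_zero {f : C₀(G, β)} (hf : f ≠ 0) (x : G) :
    ∃ t, zeroAtInftyTranslate t f x ≠ 0 := by
  obtain ⟨z, hz⟩ : ∃ z, f z ≠ 0 := DFunLike.ne_iff.1 hf
  exact ⟨-z + x, by simpa [zeroAtInftyTranslate_apply, sub_eq_add_neg, neg_add_rev] using hz⟩

end Translates

lemma addSubgroup_eq_bot_of_isBounded {E : Type*} [NormedAddCommGroup E] [NormedSpace ℝ E]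
    {S : AddSubgroup E} (hS : Bornology.IsBounded (S : Set E)) : S = ⊥ := by
  obtain ⟨C, hC⟩ := hS.exists_norm_le
  refine (AddSubgroup.eq_bot_iff_forall S).2 fun x hx ↦ ?_
  by_contra hx0
  obtain ⟨n, hn⟩ := exists_lt_nsmul (norm_pos_iff.2 hx0) C
  refine (hC (n • x) (nsmul_mem hx n)).not_gt ?_
  rwa [RCLike.norm_nsmul ℝ]

theorem stmt1_general {G 𝕜 : Type*} [AddGroup G] [TopologicalSpace G] [SeparatelyContinuousAdd G]
    [RCLike 𝕜] (hG : ∀ K : AddSubgroup G, IsCompact (K : Set G) → K = ⊥)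
    (f : C₀(G, 𝕜)) (hf : f ≠ 0) :
    (NonUnitalStarAlgebra.adjoin 𝕜
        {g : C₀(G, 𝕜) | ∃ t : G, ∀ x : G, g x = f (x - t)}).topologicalClosure = ⊤ := by
  have hmem (t : G) : zeroAtInftyTranslate t f ∈ NonUnitalStarAlgebra.adjoin 𝕜
      {g : C₀(G, 𝕜) | ∃ t : G, ∀ x : G, g x = f (x - t)} :=
    NonUnitalStarAlgebra.subset_adjoin 𝕜 _ ⟨t, zeroAtInftyTranslate_apply t f⟩
  have hperiods : leftPeriods f = ⊥ := hG _ (isCompact_leftPeriods hf)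
  apply nonUnitalStarSubalgebra_topologicalClosure_eq_top_of_separatesPoints
  · intro x y hxy
    by_contra! hcon
    have hsub : x - y ∈ leftPeriods f :=
      sub_mem_leftPeriods_of_zeroAtInftyTranslate_eq fun t ↦ hcon _ ⟨_, hmem t, rfl⟩
    rw [hperiods, AddSubgroup.mem_bot, sub_eq_zero] at hsub
    exact hxy hsub
  · intro x
    obtain ⟨t, ht⟩ := exists_zeroAtInftyTranslate_apply_ne_zero hf x
    exact ⟨_, hmem t, ht⟩

/-- For a nonzero `f ∈ C₀(ℝ, ℂ)`, the smallest norm-closed star-subalgebra of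
`C₀(ℝ, ℂ)` containing all the translates `x ↦ f (x - t)` of `f` is all of `C₀(ℝ, ℂ)`. -/
theorem stmt1 (f : C₀(ℝ, ℂ)) (hf : f ≠ 0) :
    (NonUnitalStarAlgebra.adjoin ℂ
        {g : C₀(ℝ, ℂ) | ∃ t : ℝ, ∀ x : ℝ, g x = f (x - t)}).topologicalClosure = ⊤ :=
  stmt1_general (fun _ hK ↦ addSubgroup_eq_bot_of_isBounded hK.isBounded) f hf
end

section
/- Let (X, μ) be a probability space and γ an invertible measure-preserving transformation of (X, μ), and let σ be the induced flow on ([0,1) × X, λ ⊗ μ). Then: (i) if γ is ergodic, the flow σ is ergodic, i.e. every measurable set A ⊆ [0,1) × X satisfying (λ ⊗ μ)(σ_t⁻¹(A) Δ A) = 0 for all t ∈ ℝ has (λ ⊗ μ)(A) = 0 or (λ ⊗ μ)(A) = 1; (ii) if γ is free, i.e. for every integer n ≠ 0 the set {x ∈ X : γⁿ(x) = x} is μ-null, then the flow σ is free: for every real t ≠ 0 the set {(s, x) ∈ [0,1) × X : σ_t(s, x) = (s, x)} is (λ ⊗ μ)-null. -/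
open MeasureTheory Filter Set Topology

/-- The flow on `[0,1) × X` induced by an invertible transformation `γ` of `X`:
`σ_t (s, x) = ({s + t}, γ^⌊s + t⌋ x)`. -/
noncomputable def indFlow {X : Type*} (γ : Equiv.Perm X) (t : ℝ) : ℝ × X → ℝ × X :=
  fun p => (Int.fract (p.1 + t), (γ ^ ⌊p.1 + t⌋) p.2)

/-!
Write `S (r, x) = ({r}, γ^⌊r⌋ x)`, so that `σ_t (s, x) = S (s + t, x)`. By Fubini, an invariant set
`A` satisfies, for almost every starting time `s` and almost every `x`, that `S (r, x) ∈ A` for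
almost every `r ≥ 0` if and only if `(s, x) ∈ A`. Fix one such `s` and let `B` be the section of `A`
over `s`. Times `r ∈ [0, 1)` show that `A` is `[0, 1) × B` up to a null set, and times
`r ∈ [1, 2)`, where `S (r, x) = (r - 1, γ x)`, show that `B` is almost `γ`-invariant.

For freeness, `σ_t (s, x) = (s, x)` forces `t` to be an integer `n` and `x` to be fixed by `γ^n`.
-/

section FubiniAlongTranslations

variable {G X : Type*} [AddGroup G] [MeasurableSpace G] [MeasurableAdd₂ G] [MeasurableSpace X]

lemma exists_measurableSet_ae_ae_mem_iff_of_ae_translate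
    {κ ν : Measure G} [SFinite κ] [κ.IsAddLeftInvariant] [SFinite ν] [NeZero ν]
    {μ : Measure X} [SFinite μ] {T : Set G} {E A : Set (G × X)}
    (hT : MeasurableSet T) (hE : MeasurableSet E) (hA : MeasurableSet A)
    (h : ∀ᵐ t ∂κ, ∀ᵐ p ∂ν.prod μ, p.1 + t ∈ T → ((p.1 + t, p.2) ∈ E ↔ p ∈ A)) :
    ∃ B, MeasurableSet B ∧ ∀ᵐ x ∂μ, ∀ᵐ r ∂κ, r ∈ T → ((r, x) ∈ E ↔ x ∈ B) := by
  have hmeas : MeasurableSet {q : G × (G × X) |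
      q.2.1 + q.1 ∈ T → ((q.2.1 + q.1, q.2.2) ∈ E ↔ q.2 ∈ A)} := by
    have htranslate : Measurable fun q : G × (G × X) ↦ (q.2.1 + q.1, q.2.2) := by fun_prop
    exact ((measurable_fst.comp htranslate) hT).imp ((htranslate hE).iff (measurable_snd hA))
  have hswap := Measure.ae_ae_of_ae_prod ((Measure.ae_ae_comm hmeas).1 h)
  obtain ⟨s, hs⟩ := hswap.exists
  refine ⟨Prod.mk s ⁻¹' A, measurable_prodMk_left hA, ?_⟩
  filter_upwards [hs] with x hx
  filter_upwards [(measurePreserving_add_left κ (-s)).quasiMeasurePreserving.ae hx] with r hr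
  simpa only [add_neg_cancel_left, mem_preimage] using hr

end FubiniAlongTranslations

section Suspension

variable {X : Type*}

/-- The projection of the time line `ℝ × X` onto the suspension `[0, 1) × X` of `f`, for
nonnegative times: it flows `(0, x)` for time `r`. The floor is the natural one, so that `f` need
not be invertible; for `r < 0` the second coordinate is the junk value `x`. -/
noncomputable def suspensionProj (f : X → X) (p : ℝ × X) : ℝ × X :=
  (Int.fract p.1, f^[⌊p.1⌋₊] p.2)

lemma suspensionProj_of_mem_Ico (f : X → X) {r : ℝ} (hr : r ∈ Ico (0 : ℝ) 1) (x : X) :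
    suspensionProj f (r, x) = (r, x) := by
  simp [suspensionProj, Int.fract_eq_self.2 hr, Nat.floor_eq_zero.2 hr.2]

lemma suspensionProj_add_one (f : X → X) {r : ℝ} (hr : 0 ≤ r) (x : X) :
    suspensionProj f (r + 1, x) = suspensionProj f (r, f x) := by
  simp [suspensionProj, Nat.floor_add_one hr]

lemma indFlow_eq_suspensionProj (γ : Equiv.Perm X) {t : ℝ} {p : ℝ × X} (h : 0 ≤ p.1 + t) :
    indFlow γ t p = suspensionProj γ (p.1 + t, p.2) := by
  simp [indFlow, suspensionProj, ← Int.natCast_floor_eq_floor h, Equiv.Perm.iterate_eq_pow]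

lemma measurable_suspensionProj [MeasurableSpace X] {f : X → X} (hf : Measurable f) :
    Measurable (suspensionProj f) := by
  have hiterate : Measurable fun q : ℕ × X ↦ f^[q.1] q.2 :=
    measurable_from_prod_countable_right hf.iterate
  have hfloor : Measurable fun p : ℝ × X ↦ (⌊p.1⌋₊, p.2) := by fun_prop
  exact measurable_fst.fract.prodMk (hiterate.comp hfloor)

lemma ae_mem_iff_mem_of_suspensionProj {f : X → X} {A : Set (ℝ × X)} {x : X} {P : Prop}
    (h : ∀ᵐ r : ℝ, 0 ≤ r → (suspensionProj f (r, x) ∈ A ↔ P)) :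
    (∀ᵐ r ∂volume.restrict (Ico (0 : ℝ) 1), ((r, x) ∈ A ↔ P)) ∧
      ∀ᵐ r ∂volume.restrict (Ico (0 : ℝ) 1), ((r, f x) ∈ A ↔ P) := by
  have hIco := ae_restrict_mem (μ := volume) (measurableSet_Ico (a := (0 : ℝ)) (b := 1))
  have hshift := (measurePreserving_add_right volume (1 : ℝ)).quasiMeasurePreserving.ae h
  constructor
  · filter_upwards [ae_restrict_of_ae h, hIco] with r hr hr01
    simpa only [suspensionProj_of_mem_Ico f hr01] using hr hr01.1
  · filter_upwards [ae_restrict_of_ae hshift, hIco] with r hr hr01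
    simpa only [suspensionProj_add_one f hr01.1, suspensionProj_of_mem_Ico f hr01]
      using hr (add_nonneg hr01.1 zero_le_one)

end Suspension

section Ergodicity

variable {X : Type*} [MeasurableSpace X] {μ : Measure X} [SFinite μ]

lemma ae_eq_preimage_snd_of_ae_ae_mem_iff {Y : Type*} [MeasurableSpace Y] {ν : Measure Y}
    [SFinite ν] {A : Set (Y × X)} {B : Set X} (hA : MeasurableSet A) (hB : MeasurableSet B)
    (h : ∀ᵐ x ∂μ, ∀ᵐ y ∂ν, ((y, x) ∈ A ↔ x ∈ B)) :
    A =ᵐ[ν.prod μ] Prod.snd ⁻¹' B := by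
  have hmeas : MeasurableSet {p : Y × X | p ∈ A ↔ p.2 ∈ B} := hA.iff (measurable_snd hB)
  exact eventuallyEq_set.2 <|
    (Measure.ae_prod_iff_ae_ae hmeas).2 ((Measure.ae_ae_comm hmeas).2 h)

lemma exists_ae_eq_preimage_snd_of_suspensionProj_invariant {f : X → X}
    (hf : Measure.QuasiMeasurePreserving f μ μ) {A : Set (ℝ × X)} (hA : MeasurableSet A)
    (hinv : ∀ᵐ t : ℝ, ∀ᵐ p ∂(volume.restrict (Ico (0 : ℝ) 1)).prod μ,
      0 ≤ p.1 + t → (suspensionProj f (p.1 + t, p.2) ∈ A ↔ p ∈ A)) :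
    ∃ B, MeasurableSet B ∧ f ⁻¹' B =ᵐ[μ] B ∧
      A =ᵐ[(volume.restrict (Ico (0 : ℝ) 1)).prod μ] Prod.snd ⁻¹' B := by
  have : NeZero (volume.restrict (Ico (0 : ℝ) 1)) := ⟨by simp⟩
  obtain ⟨B, hB, hflow⟩ := exists_measurableSet_ae_ae_mem_iff_of_ae_translate
    measurableSet_Ici (measurable_suspensionProj hf.measurable hA) hA hinv
  have hfibre := hflow.mono fun x hx ↦ ae_mem_iff_mem_of_suspensionProj hx
  refine ⟨B, hB, eventuallyEq_set.2 ?_,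
    ae_eq_preimage_snd_of_ae_ae_mem_iff hA hB (hfibre.mono fun _ ↦ And.left)⟩
  filter_upwards [hfibre, hf.ae hfibre] with x hx hfx
  obtain ⟨r, hrx, hrfx⟩ := (hx.2.and hfx.1).exists
  exact hrfx.symm.trans hrx

theorem indFlow_measure_eq_zero_or_measure_compl_eq_zero {γ : Equiv.Perm X}
    (hγ : Measure.QuasiMeasurePreserving γ μ μ)
    (herg : ∀ B : Set X, MeasurableSet B → μ (symmDiff (γ ⁻¹' B) B) = 0 → μ B = 0 ∨ μ Bᶜ = 0)
    {A : Set (ℝ × X)} (hA : MeasurableSet A)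
    (hinv : ∀ᵐ t : ℝ, ((volume.restrict (Ico (0 : ℝ) 1)).prod μ)
      (symmDiff (indFlow γ t ⁻¹' A) A) = 0) :
    ((volume.restrict (Ico (0 : ℝ) 1)).prod μ) A = 0 ∨
      ((volume.restrict (Ico (0 : ℝ) 1)).prod μ) Aᶜ = 0 := by
  obtain ⟨B, hB, hBinv, hAB⟩ := exists_ae_eq_preimage_snd_of_suspensionProj_invariant hγ hA <| by
    filter_upwards [hinv] with t ht
    filter_upwards [eventuallyEq_set.1 (measure_symmDiff_eq_zero_iff.1 ht)] with p hp hpt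
    rwa [← indFlow_eq_suspensionProj γ hpt]
  rw [measure_congr hAB, measure_congr hAB.compl]
  exact (herg B hB (measure_symmDiff_eq_zero_iff.2 hBinv)).imp
    Measure.quasiMeasurePreserving_snd.preimage_null
    Measure.quasiMeasurePreserving_snd.preimage_null

end Ergodicity

section Freeness

variable {X : Type*}

lemma exists_intCast_eq_of_indFlow_eq_self {γ : Equiv.Perm X} {t : ℝ} {p : ℝ × X}
    (h : indFlow γ t p = p) : ∃ n : ℤ, (n : ℝ) = t ∧ (γ ^ n) p.2 = p.2 := by
  obtain ⟨hfract, hfixed⟩ := Prod.ext_iff.1 h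
  refine ⟨⌊p.1 + t⌋, ?_, hfixed⟩
  have : p.1 + t - ⌊p.1 + t⌋ = p.1 := hfract
  linarith

theorem measure_indFlow_eq_self_eq_zero [MeasurableSpace X] (ν : Measure ℝ) {μ : Measure X}
    [SFinite μ] {γ : Equiv.Perm X} (hfree : ∀ n : ℤ, n ≠ 0 → μ {x : X | (γ ^ n) x = x} = 0)
    {t : ℝ} (ht : t ≠ 0) : (ν.prod μ) {p : ℝ × X | indFlow γ t p = p} = 0 := by
  have hperiodic : μ {x | ∃ n : ℤ, (n : ℝ) = t ∧ (γ ^ n) x = x} = 0 := by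
    simp only [ofPred_exists]
    refine measure_iUnion_null fun n ↦ ?_
    by_cases hn : (n : ℝ) = t
    · have hn0 : n ≠ 0 := by rintro rfl; exact ht (by simpa using hn.symm)
      simpa [hn] using hfree n hn0
    · simp [hn]
  exact measure_mono_null (fun _ ↦ exists_intCast_eq_of_indFlow_eq_self)
    (Measure.quasiMeasurePreserving_snd.preimage_null hperiodic)

end Freeness

theorem stmt6_general {X : Type*} [MeasurableSpace X] (μ : Measure X) [SFinite μ]
    (γ : Equiv.Perm X) (hγ : Measure.QuasiMeasurePreserving γ μ μ) :
    ((∀ B : Set X, MeasurableSet B → μ (symmDiff (γ ⁻¹' B) B) = 0 → μ B = 0 ∨ μ Bᶜ = 0) →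
      ∀ A : Set (ℝ × X), MeasurableSet A →
        (∀ᵐ t : ℝ, ((volume.restrict (Ico (0 : ℝ) 1)).prod μ)
            (symmDiff (indFlow γ t ⁻¹' A) A) = 0) →
        ((volume.restrict (Ico (0 : ℝ) 1)).prod μ) A = 0 ∨
          ((volume.restrict (Ico (0 : ℝ) 1)).prod μ) Aᶜ = 0) ∧
    ((∀ n : ℤ, n ≠ 0 → μ {x : X | (γ ^ n) x = x} = 0) →
      ∀ t : ℝ, t ≠ 0 →
        ((volume.restrict (Ico (0 : ℝ) 1)).prod μ) {p : ℝ × X | indFlow γ t p = p} = 0) :=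
  ⟨fun herg _ hA hinv ↦ indFlow_measure_eq_zero_or_measure_compl_eq_zero hγ herg hA hinv,
    fun hfree _ ht ↦ measure_indFlow_eq_self_eq_zero _ hfree ht⟩

/-- For an invertible measure-preserving transformation `γ` of a probability
space `(X, μ)` with induced flow `σ` on `([0,1) × X, λ ⊗ μ)`:
(i) if `γ` is ergodic then the flow `σ` is ergodic, and
(ii) if `γ` is free then the flow `σ` is free. -/
theorem stmt6 {X : Type*} [MeasurableSpace X] (μ : Measure X) [IsProbabilityMeasure μ]
    (γ : Equiv.Perm X) (hγ : MeasurePreserving γ μ μ) (hγ' : Measurable ⇑γ.symm) :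
    ((∀ B : Set X, MeasurableSet B → μ (symmDiff (⇑γ ⁻¹' B) B) = 0 → μ B = 0 ∨ μ B = 1) →
      ∀ A : Set (ℝ × X), MeasurableSet A →
        (∀ t : ℝ, ((volume.restrict (Ico (0:ℝ) 1)).prod μ)
            (symmDiff (indFlow γ t ⁻¹' A) A) = 0) →
        ((volume.restrict (Ico (0:ℝ) 1)).prod μ) A = 0 ∨
          ((volume.restrict (Ico (0:ℝ) 1)).prod μ) A = 1) ∧
    ((∀ n : ℤ, n ≠ 0 → μ {x : X | (γ ^ n) x = x} = 0) →
      ∀ t : ℝ, t ≠ 0 →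
        ((volume.restrict (Ico (0:ℝ) 1)).prod μ) {p : ℝ × X | indFlow γ t p = p} = 0) := by
  have : IsProbabilityMeasure (volume.restrict (Ico (0 : ℝ) 1)) := ⟨by simp⟩
  refine (stmt6_general μ γ hγ.quasiMeasurePreserving).imp_left fun hflow herg A hA hinv ↦ ?_
  exact (hflow (fun B hB hBinv ↦ (herg B hB hBinv).imp_right (prob_compl_eq_zero_iff hB).2)
    A hA (ae_of_all _ hinv)).imp_right (prob_compl_eq_zero_iff hA).1
end

section
/- Let r, r' ∈ (0, 1/2] with r ≠ r'. Then the Bernoulli shifts γ_r on (X_r, μ_r) and γ_{r'} on (X_{r'}, μ_{r'}) are not conjugate: there is no measurable map Φ : X_r → X_{r'} such that the pushforward of μ_r under Φ equals μ_{r'}, Φ is injective off a μ_r-null set, Φ(X_r) has full μ_{r'}-measure, and Φ(γ_r(x)) = γ_{r'}(Φ(x)) for μ_r-almost every x. -/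
open MeasureTheory Filter Set Topology

/-- The Bernoulli shift on `{0,1}^ℤ`, as a bijection: `(shiftPerm c) n = c (n + 1)`. -/
def shiftPerm : Equiv.Perm (ℤ → Fin 2) where
  toFun c := fun n => c (n + 1)
  invFun c := fun n => c (n - 1)
  left_inv c := funext fun n => by simp
  right_inv c := funext fun n => by simp

/-!
Entropy distinguishes the two shifts. The Kolmogorov–Sinai entropy is the supremum over all
finite-valued observables of the mean entropy per step along an orbit, and it is a conjugacy
invariant because a conjugacy carries observables to observables with the same itinerary laws.
For a shift-invariant measure the supremum is attained by the zero coordinate. Indeed, an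
observable depending on finitely many coordinates is determined by a shifted word of the process,
and any observable differs from such a one only on a set of small measure, hence by an error of
small entropy. For a Bernoulli measure the coordinates are independent, so the entropy of the shift
is the Shannon entropy of one letter, which for a two-letter alphabet is a strictly increasing
function of `r ∈ [0, 1/2]`.
-/

open Real (negMulLog)

section ShannonEntropy

variable {Ω Ω' α β : Type*} [MeasurableSpace Ω] [MeasurableSpace Ω']
  {μ : Measure Ω} {ν : Measure Ω'} {X : Ω → α} {Y : Ω → β}

theorem measureReal_preimage_singleton_le_comp [IsFiniteMeasure μ] (X : Ω → α) (f : α → β) (a : α) :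
    μ.real (X ⁻¹' {a}) ≤ μ.real (f ∘ X ⁻¹' {f a}) :=
  measureReal_mono fun _ hω ↦ congrArg f hω

variable [Fintype α] [Fintype β]

theorem sum_negMulLog_le_sum_neg_mul_log {ι : Type*} {s : Finset ι} {p q : ι → ℝ}
    (hp : ∀ i ∈ s, 0 ≤ p i) (hq : ∀ i ∈ s, 0 ≤ q i) (hpq : ∀ i ∈ s, q i = 0 → p i = 0)
    (hsum : ∑ i ∈ s, q i ≤ ∑ i ∈ s, p i) :
    ∑ i ∈ s, negMulLog (p i) ≤ ∑ i ∈ s, -p i * Real.log (q i) := by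
  have hterm : ∀ i ∈ s, negMulLog (p i) ≤ -p i * Real.log (q i) + (q i - p i) := by
    intro i hi
    rcases (hp i hi).eq_or_lt with hpi | hpi
    · simpa [← hpi] using hq i hi
    · have hqi : 0 < q i := (hq i hi).lt_of_ne' fun h ↦ hpi.ne' (hpq i hi h)
      have hlog : p i * Real.log (q i / p i) ≤ q i - p i :=
        calc p i * Real.log (q i / p i) ≤ p i * (q i / p i - 1) := by
              gcongr
              exact Real.log_le_sub_one_of_pos (by positivity)
          _ = q i - p i := by field_simp
      rw [Real.log_div hqi.ne' hpi.ne'] at hlog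
      rw [negMulLog]
      linarith
  have := Finset.sum_le_sum hterm
  rw [Finset.sum_add_distrib, Finset.sum_sub_distrib] at this
  linarith

theorem sum_negMulLog_prod {q : α → ℝ} (hq : ∑ a, q a = 1) (n : ℕ) :
    ∑ w : Fin n → α, negMulLog (∏ i, q (w i)) = n * ∑ a, negMulLog (q a) := by
  have hprod (m : ℕ) : ∑ w : Fin m → α, ∏ i, q (w i) = 1 := by
    classical
    rw [← Fintype.prod_sum fun (_ : Fin m) a ↦ q a]
    simp [hq]
  induction n with
  | zero => simp
  | succ n ih =>
    rw [← (Fin.consEquiv fun _ ↦ α).sum_comp, Fintype.sum_prod_type]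
    simp only [Fin.consEquiv, Equiv.coe_fn_mk, Fin.prod_univ_succ, Fin.cons_zero, Fin.cons_succ,
      Real.negMulLog_mul, Finset.sum_add_distrib, ← Finset.mul_sum, ← Finset.sum_mul, hprod, ih, hq]
    push_cast
    ring

/-- The Shannon entropy `-∑ₐ ℙ(X = a) log ℙ(X = a)` (in nats) of a random variable `X` with values
in a finite type, equivalently of the partition of `Ω` into the fibres of `X`. -/
noncomputable def shannonEntropy (μ : Measure Ω) (X : Ω → α) : ℝ :=
  ∑ a, negMulLog (μ.real (X ⁻¹' {a}))

theorem shannonEntropy_nonneg [IsProbabilityMeasure μ] (X : Ω → α) : 0 ≤ shannonEntropy μ X :=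
  Finset.sum_nonneg fun _ _ ↦ Real.negMulLog_nonneg measureReal_nonneg measureReal_le_one

theorem shannonEntropy_eq_zero_of_subsingleton [Subsingleton α] [IsProbabilityMeasure μ]
    (X : Ω → α) : shannonEntropy μ X = 0 := by
  refine Finset.sum_eq_zero fun a _ ↦ ?_
  have huniv : X ⁻¹' {a} = univ := eq_univ_of_forall fun ω ↦ Subsingleton.elim (X ω) a
  simp [huniv]

theorem shannonEntropy_congr_ae {X' : Ω → α} (h : X =ᵐ[μ] X') :
    shannonEntropy μ X = shannonEntropy μ X' := by
  refine Finset.sum_congr rfl fun a _ ↦ congrArg negMulLog (measureReal_congr ?_)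
  filter_upwards [h] with ω hω
  exact congrArg (· = a) hω

variable [MeasurableSpace α] [MeasurableSingletonClass α]

theorem shannonEntropy_comp_measurePreserving {f : Ω' → Ω} (hf : MeasurePreserving f ν μ)
    (hX : Measurable X) : shannonEntropy ν (X ∘ f) = shannonEntropy μ X :=
  Finset.sum_congr rfl fun a _ ↦ congrArg negMulLog <|
    hf.measureReal_preimage (hX (measurableSet_singleton a)).nullMeasurableSet

theorem sum_measureReal_preimage_singleton_mul_comp [IsFiniteMeasure μ] (hX : Measurable X)
    (f : α → β) (g : β → ℝ) :
    ∑ a, μ.real (X ⁻¹' {a}) * g (f a) = ∑ b, μ.real (f ∘ X ⁻¹' {b}) * g b := by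
  classical
  have hfib (b : β) : μ.real (f ∘ X ⁻¹' {b}) = ∑ a with f a = b, μ.real (X ⁻¹' {a}) := by
    rw [sum_measureReal_preimage_singleton _ fun a _ ↦ hX (measurableSet_singleton a)]
    congr 1
    ext ω
    simp
  simp_rw [hfib, Finset.sum_mul]
  rw [← Finset.sum_fiberwise Finset.univ f]
  refine Finset.sum_congr rfl fun b _ ↦ Finset.sum_congr rfl fun a ha ↦ ?_
  rw [(Finset.mem_filter.1 ha).2]

theorem shannonEntropy_comp_eq_sum [IsFiniteMeasure μ] (hX : Measurable X) (f : α → β) :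
    shannonEntropy μ (f ∘ X) =
      ∑ a, -μ.real (X ⁻¹' {a}) * Real.log (μ.real (f ∘ X ⁻¹' {f a})) := by
  simp only [shannonEntropy, negMulLog, neg_mul, Finset.sum_neg_distrib]
  rw [sum_measureReal_preimage_singleton_mul_comp hX f
    fun b ↦ Real.log (μ.real (f ∘ X ⁻¹' {b}))]

theorem shannonEntropy_comp_le [IsFiniteMeasure μ] (hX : Measurable X) (f : α → β) :
    shannonEntropy μ (f ∘ X) ≤ shannonEntropy μ X := by
  rw [shannonEntropy_comp_eq_sum hX]
  refine Finset.sum_le_sum fun a _ ↦ ?_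
  rcases (measureReal_nonneg (μ := μ) (s := X ⁻¹' {a})).eq_or_lt with h | h
  · simp [← h]
  · exact mul_le_mul_of_nonpos_left
      (Real.log_le_log h (measureReal_preimage_singleton_le_comp X f a)) (by linarith)

theorem shannonEntropy_le_of_factorsThrough [IsProbabilityMeasure μ] (hX : Measurable X)
    (h : Y.FactorsThrough X) : shannonEntropy μ Y ≤ shannonEntropy μ X := by
  have : Nonempty β := (nonempty_of_isProbabilityMeasure μ).map Y
  obtain ⟨f, rfl⟩ := (Function.factorsThrough_iff Y).1 h
  exact shannonEntropy_comp_le hX f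

theorem sum_measureReal_preimage_singleton_eq_one [IsProbabilityMeasure μ] (hX : Measurable X) :
    ∑ a, μ.real (X ⁻¹' {a}) = 1 := by
  rw [sum_measureReal_preimage_singleton _ fun a _ ↦ hX (measurableSet_singleton a)]
  simp

variable [MeasurableSpace β] [MeasurableSingletonClass β]

/-- Gibbs' inequality, comparing the joint law with the product of the marginals. -/
theorem shannonEntropy_prodMk_le [IsProbabilityMeasure μ] (hX : Measurable X) (hY : Measurable Y) :
    shannonEntropy μ (fun ω ↦ (X ω, Y ω)) ≤ shannonEntropy μ X + shannonEntropy μ Y := by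
  set Z : Ω → α × β := fun ω ↦ (X ω, Y ω)
  have hZ : Measurable Z := hX.prodMk hY
  have hle_fst (c : α × β) : μ.real (Z ⁻¹' {c}) ≤ μ.real (X ⁻¹' {c.1}) :=
    measureReal_preimage_singleton_le_comp Z Prod.fst c
  have hle_snd (c : α × β) : μ.real (Z ⁻¹' {c}) ≤ μ.real (Y ⁻¹' {c.2}) :=
    measureReal_preimage_singleton_le_comp Z Prod.snd c
  have hmass : ∑ c : α × β, μ.real (X ⁻¹' {c.1}) * μ.real (Y ⁻¹' {c.2}) =
      ∑ c, μ.real (Z ⁻¹' {c}) := by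
    simp only [Fintype.sum_prod_type, ← Finset.mul_sum, ← Finset.sum_mul]
    rw [← Fintype.sum_prod_type' fun a b ↦ μ.real (Z ⁻¹' {(a, b)}),
      sum_measureReal_preimage_singleton_eq_one hX, sum_measureReal_preimage_singleton_eq_one hY,
      sum_measureReal_preimage_singleton_eq_one hZ, one_mul]
  calc shannonEntropy μ Z
      ≤ ∑ c : α × β, -μ.real (Z ⁻¹' {c}) *
          Real.log (μ.real (X ⁻¹' {c.1}) * μ.real (Y ⁻¹' {c.2})) := by
        refine sum_negMulLog_le_sum_neg_mul_log (fun _ _ ↦ measureReal_nonneg)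
          (fun _ _ ↦ by positivity) (fun c _ hc ↦ ?_) hmass.le
        rcases mul_eq_zero.1 hc with h | h
        · exact le_antisymm (h ▸ hle_fst c) measureReal_nonneg
        · exact le_antisymm (h ▸ hle_snd c) measureReal_nonneg
    _ = ∑ c : α × β, (-μ.real (Z ⁻¹' {c}) * Real.log (μ.real (X ⁻¹' {c.1})) +
          -μ.real (Z ⁻¹' {c}) * Real.log (μ.real (Y ⁻¹' {c.2}))) := by
        refine Finset.sum_congr rfl fun c _ ↦ ?_
        rcases (measureReal_nonneg (μ := μ) (s := Z ⁻¹' {c})).eq_or_lt with h | h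
        · simp [← h]
        · rw [Real.log_mul (h.trans_le (hle_fst c)).ne' (h.trans_le (hle_snd c)).ne', mul_add]
    _ = shannonEntropy μ X + shannonEntropy μ Y := by
        rw [Finset.sum_add_distrib]
        exact congrArg₂ (· + ·) (shannonEntropy_comp_eq_sum hZ Prod.fst).symm
          (shannonEntropy_comp_eq_sum hZ Prod.snd).symm

theorem exists_shannonEntropy_lt_of_measureReal_ne_lt [IsProbabilityMeasure μ] (a₀ : α) {ε : ℝ}
    (hε : 0 < ε) : ∃ δ > 0, ∀ X : Ω → α, Measurable X → μ.real {ω | X ω ≠ a₀} < δ →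
      shannonEntropy μ X < ε := by
  classical
  have hcont : Continuous fun p : α → ℝ ↦ ∑ a, negMulLog (p a) := by fun_prop
  have hzero : ∑ a, negMulLog ((Pi.single a₀ 1 : α → ℝ) a) = 0 :=
    Finset.sum_eq_zero fun a _ ↦ by rcases eq_or_ne a a₀ with rfl | h <;> simp [*]
  obtain ⟨δ, hδ, hclose⟩ := Metric.continuous_iff.1 hcont (Pi.single a₀ 1) ε hε
  refine ⟨δ, hδ, fun X hX hXδ ↦ ?_⟩
  have hdist : dist (fun a ↦ μ.real (X ⁻¹' {a})) (Pi.single a₀ 1) < δ := by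
    refine (dist_pi_lt_iff hδ).2 fun a ↦ lt_of_le_of_lt ?_ hXδ
    rcases eq_or_ne a a₀ with rfl | ha
    · have hcompl : {ω | X ω ≠ a} = (X ⁻¹' {a})ᶜ := rfl
      rw [hcompl, probReal_compl_eq_one_sub (hX (measurableSet_singleton a)), Pi.single_eq_same,
        dist_comm, Real.dist_eq, abs_of_nonneg (sub_nonneg.2 measureReal_le_one)]
    · rw [Pi.single_eq_of_ne ha, Real.dist_eq, sub_zero, abs_of_nonneg measureReal_nonneg]
      exact measureReal_mono fun ω hω ↦ ne_of_eq_of_ne hω ha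
  have := hclose _ hdist
  rw [hzero, Real.dist_eq, sub_zero] at this
  exact (le_abs_self _).trans_lt this

end ShannonEntropy

section EntropyRate

variable {Ω α β γ : Type*} {T : Ω → Ω}

/-- The random word `(X, X ∘ T, …, X ∘ T^(n-1))` recorded by the observable `X` along the first `n`
points of an orbit of `T`; its fibres form the join of the partitions `T^(-i) X` for `i < n`. -/
def itinerary (T : Ω → Ω) (X : Ω → α) (n : ℕ) (ω : Ω) : Fin n → α :=
  fun i ↦ X (T^[i] ω)

theorem itinerary_comp_iterate (T : Ω → Ω) (X : Ω → α) (n k : ℕ) :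
    itinerary T (X ∘ T^[k]) n = itinerary T X n ∘ T^[k] := by
  ext ω i
  simp only [itinerary, Function.comp_apply, ← Function.iterate_add_apply, add_comm]

theorem itinerary_add_factorsThrough (T : Ω → Ω) (X : Ω → α) (m n : ℕ) :
    (itinerary T X (m + n)).FactorsThrough
      fun ω ↦ (itinerary T X m ω, itinerary T X n (T^[m] ω)) := by
  intro ω ω' h
  rw [Prod.mk.injEq] at h
  refine funext <| Fin.addCases (fun i ↦ congrFun h.1 i) fun i ↦ ?_
  simpa only [itinerary, Fin.val_natAdd, add_comm m, Function.iterate_add_apply]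
    using congrFun h.2 i

theorem itinerary_itinerary_factorsThrough (T : Ω → Ω) (X : Ω → α) (m n : ℕ) :
    (itinerary T (itinerary T X m) n).FactorsThrough (itinerary T X (n + m)) := by
  intro ω ω' h
  ext i j
  simpa only [itinerary, ← Function.iterate_add_apply] using congrFun h ⟨j + i, by omega⟩

theorem itinerary_factorsThrough {X : Ω → α} {Y : Ω → β} (h : X.FactorsThrough Y) (n : ℕ) :
    (itinerary T X n).FactorsThrough (itinerary T Y n) :=
  fun _ _ hY ↦ funext fun i ↦ h (congrFun hY i)

theorem measurable_itinerary [MeasurableSpace Ω] [MeasurableSpace α] {X : Ω → α}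
    (hT : Measurable T) (hX : Measurable X) (n : ℕ) : Measurable (itinerary T X n) :=
  measurable_pi_lambda _ fun i ↦ hX.comp (hT.iterate i)

variable [MeasurableSpace Ω] {μ : Measure Ω} [Fintype α] [Fintype β] [Fintype γ]

/-- The mean entropy per step `lim H(X, X ∘ T, …, X ∘ T^(n-1)) / n` of the observable `X` along the
orbits of `T`. It is defined as an upper limit; for a measure preserving `T` the limit exists, see
`tendsto_entropyRate`. -/
noncomputable def entropyRate (μ : Measure Ω) (T : Ω → Ω) (X : Ω → α) : ℝ :=
  limsup (fun n : ℕ ↦ shannonEntropy μ (itinerary T X n) / n) atTop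

variable [MeasurableSpace α] [MeasurableSingletonClass α]
  [MeasurableSpace β] [MeasurableSingletonClass β] [MeasurableSpace γ] [MeasurableSingletonClass γ]
  {X : Ω → α} {Y : Ω → β} {Z : Ω → γ}

theorem entropyRate_comp_iterate (hT : MeasurePreserving T μ μ) (hX : Measurable X) (k : ℕ) :
    entropyRate μ T (X ∘ T^[k]) = entropyRate μ T X := by
  simp only [entropyRate, itinerary_comp_iterate,
    shannonEntropy_comp_measurePreserving (hT.iterate k) (measurable_itinerary hT.measurable hX _)]

variable [IsProbabilityMeasure μ]

theorem subadditive_shannonEntropy_itinerary (hT : MeasurePreserving T μ μ) (hX : Measurable X) :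
    Subadditive fun n ↦ shannonEntropy μ (itinerary T X n) := by
  intro m n
  have hXm := measurable_itinerary hT.measurable hX m
  have hXn := measurable_itinerary hT.measurable hX n
  have hshift := hXn.comp (hT.iterate m).measurable
  calc shannonEntropy μ (itinerary T X (m + n))
      ≤ shannonEntropy μ (fun ω ↦ (itinerary T X m ω, (itinerary T X n ∘ T^[m]) ω)) :=
        shannonEntropy_le_of_factorsThrough (hXm.prodMk hshift)
          (itinerary_add_factorsThrough T X m n)
    _ ≤ shannonEntropy μ (itinerary T X m) + shannonEntropy μ (itinerary T X n ∘ T^[m]) :=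
        shannonEntropy_prodMk_le hXm hshift
    _ = shannonEntropy μ (itinerary T X m) + shannonEntropy μ (itinerary T X n) := by
        rw [shannonEntropy_comp_measurePreserving (hT.iterate m) hXn]

theorem shannonEntropy_itinerary_le (hT : MeasurePreserving T μ μ) (hX : Measurable X) (n : ℕ) :
    shannonEntropy μ (itinerary T X n) ≤ n * shannonEntropy μ X := by
  have hone : shannonEntropy μ (itinerary T X 1) ≤ shannonEntropy μ X :=
    shannonEntropy_le_of_factorsThrough hX fun ω ω' h ↦ funext fun i ↦ by
      simpa [itinerary, Subsingleton.elim i 0] using h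
  have hzero : shannonEntropy μ (itinerary T X 0) = 0 :=
    shannonEntropy_eq_zero_of_subsingleton _
  have := (subadditive_shannonEntropy_itinerary hT hX).apply_mul_add_le n 1 0
  grw [mul_one, add_zero, hzero, add_zero, hone] at this
  exact this

theorem tendsto_entropyRate (hT : MeasurePreserving T μ μ) (hX : Measurable X) :
    Tendsto (fun n : ℕ ↦ shannonEntropy μ (itinerary T X n) / n) atTop
      (𝓝 (entropyRate μ T X)) := by
  have hbdd : BddBelow (range fun n : ℕ ↦ shannonEntropy μ (itinerary T X n) / n) :=
    ⟨0, forall_mem_range.2 fun n ↦ div_nonneg (shannonEntropy_nonneg _) n.cast_nonneg⟩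
  have hlim := (subadditive_shannonEntropy_itinerary hT hX).tendsto_lim hbdd
  rwa [entropyRate, hlim.limsup_eq]

theorem entropyRate_le_add_of_forall_le (hT : MeasurePreserving T μ μ) (hX : Measurable X)
    (hY : Measurable Y) (m : ℕ) (c : ℝ)
    (h : ∀ n : ℕ, shannonEntropy μ (itinerary T X n) ≤
      shannonEntropy μ (itinerary T Y (n + m)) + n * c) :
    entropyRate μ T X ≤ entropyRate μ T Y + c := by
  have hratio : Tendsto (fun n : ℕ ↦ ((n + m : ℕ) : ℝ) / n) atTop (𝓝 1) := by
    have := (tendsto_const_div_atTop_nhds_zero_nat (m : ℝ)).const_add 1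
    rw [add_zero] at this
    refine this.congr' ((eventually_ne_atTop 0).mono fun n hn ↦ ?_)
    push_cast
    field_simp
  have hY' := (((tendsto_entropyRate hT hY).comp (tendsto_add_atTop_nat m)).mul hratio).add_const c
  rw [mul_one] at hY'
  refine le_of_tendsto_of_tendsto (tendsto_entropyRate hT hX) hY'
    ((eventually_ne_atTop 0).mono fun n hn ↦ ?_)
  have hn' : (n : ℝ) ≠ 0 := by positivity
  have hnm : ((n + m : ℕ) : ℝ) ≠ 0 := by positivity
  calc shannonEntropy μ (itinerary T X n) / n
      ≤ (shannonEntropy μ (itinerary T Y (n + m)) + n * c) / n := by gcongr; exact h n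
    _ = shannonEntropy μ (itinerary T Y (n + m)) / (n + m : ℕ) * ((n + m : ℕ) / n) + c := by
        rw [div_mul_div_cancel₀ hnm, add_div, mul_div_cancel_left₀ c hn']

theorem entropyRate_le_of_factorsThrough (hT : MeasurePreserving T μ μ) (hX : Measurable X)
    (hY : Measurable Y) (h : X.FactorsThrough Y) : entropyRate μ T X ≤ entropyRate μ T Y := by
  simpa using entropyRate_le_add_of_forall_le hT hX hY 0 0 fun n ↦ by
    simpa using shannonEntropy_le_of_factorsThrough (measurable_itinerary hT.measurable hY n)
      (itinerary_factorsThrough h n)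

theorem entropyRate_itinerary_le (hT : MeasurePreserving T μ μ) (hX : Measurable X) (m : ℕ) :
    entropyRate μ T (itinerary T X m) ≤ entropyRate μ T X := by
  have hXm := measurable_itinerary hT.measurable hX m
  simpa using entropyRate_le_add_of_forall_le hT hXm hX m 0 fun n ↦ by
    simpa using shannonEntropy_le_of_factorsThrough (measurable_itinerary hT.measurable hX (n + m))
      (itinerary_itinerary_factorsThrough T X m n)

theorem entropyRate_le_add_shannonEntropy (hT : MeasurePreserving T μ μ) (hX : Measurable X)
    (hY : Measurable Y) (hZ : Measurable Z) (h : X.FactorsThrough fun ω ↦ (Y ω, Z ω)) :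
    entropyRate μ T X ≤ entropyRate μ T Y + shannonEntropy μ Z := by
  refine entropyRate_le_add_of_forall_le hT hX hY 0 _ fun n ↦ ?_
  have hYn := measurable_itinerary hT.measurable hY n
  have hZn := measurable_itinerary hT.measurable hZ n
  calc shannonEntropy μ (itinerary T X n)
      ≤ shannonEntropy μ (fun ω ↦ (itinerary T Y n ω, itinerary T Z n ω)) :=
        shannonEntropy_le_of_factorsThrough (hYn.prodMk hZn) fun ω ω' hω ↦ by
          rw [Prod.mk.injEq] at hω
          exact funext fun i ↦ h (Prod.ext (congrFun hω.1 i) (congrFun hω.2 i))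
    _ ≤ shannonEntropy μ (itinerary T Y n) + shannonEntropy μ (itinerary T Z n) :=
        shannonEntropy_prodMk_le hYn hZn
    _ ≤ shannonEntropy μ (itinerary T Y n) + n * shannonEntropy μ Z := by
        gcongr
        exact shannonEntropy_itinerary_le hT hZ n

end EntropyRate

section KolmogorovSinai

variable {Ω Ω' α : Type*} [MeasurableSpace Ω] {μ : Measure Ω} {T : Ω → Ω} {S : Ω' → Ω'}
  {Φ : Ω → Ω'}

/-- The Kolmogorov–Sinai entropy of `T`: the supremum of the entropy rates of all finite-valued
observables. Only the target types `Fin k` occur in the definition, to avoid quantifying over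
universes; see `entropyRate_le_kolmogorovSinaiEntropy` for arbitrary finite types. The values lie in
`EReal` since the supremum may be infinite. -/
noncomputable def kolmogorovSinaiEntropy (μ : Measure Ω) (T : Ω → Ω) : EReal :=
  ⨆ (k : ℕ) (X : Ω → Fin k) (_ : Measurable X), (entropyRate μ T X : EReal)

theorem entropyRate_le_kolmogorovSinaiEntropy [IsProbabilityMeasure μ] [Fintype α]
    [MeasurableSpace α] [MeasurableSingletonClass α] (hT : MeasurePreserving T μ μ) {X : Ω → α}
    (hX : Measurable X) : (entropyRate μ T X : EReal) ≤ kolmogorovSinaiEntropy μ T := by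
  let e := Fintype.equivFin α
  have heX : Measurable (e ∘ X) := (measurable_of_finite e).comp hX
  calc (entropyRate μ T X : EReal) ≤ entropyRate μ T (e ∘ X) := by
        exact_mod_cast entropyRate_le_of_factorsThrough hT hX heX fun _ _ h ↦ e.injective h
    _ ≤ kolmogorovSinaiEntropy μ T :=
        le_iSup_of_le _ <| le_iSup_of_le (e ∘ X) <| le_iSup_of_le heX le_rfl

theorem ae_map_iterate_eq_iterate_map (hT : Measure.QuasiMeasurePreserving T μ μ)
    (hΦ : ∀ᵐ x ∂μ, Φ (T x) = S (Φ x)) (n : ℕ) : ∀ᵐ x ∂μ, Φ (T^[n] x) = S^[n] (Φ x) := by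
  induction n with
  | zero => simp
  | succ n ih =>
    filter_upwards [ih, (hT.iterate n).ae hΦ] with x hx hTx
    rw [Function.iterate_succ_apply', hTx, hx, Function.iterate_succ_apply']

variable [MeasurableSpace Ω'] {ν : Measure Ω'}

theorem entropyRate_comp_of_semiconj [Fintype α] [MeasurableSpace α] [MeasurableSingletonClass α]
    (hT : Measure.QuasiMeasurePreserving T μ μ) (hS : Measurable S) (hΦ : MeasurePreserving Φ μ ν)
    (hcomm : ∀ᵐ x ∂μ, Φ (T x) = S (Φ x)) {X : Ω' → α} (hX : Measurable X) :
    entropyRate μ T (X ∘ Φ) = entropyRate ν S X := by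
  have hitin (n : ℕ) : itinerary T (X ∘ Φ) n =ᵐ[μ] itinerary S X n ∘ Φ := by
    filter_upwards [ae_all_iff.2 (ae_map_iterate_eq_iterate_map hT hcomm)] with x hx
    exact funext fun i ↦ congrArg X (hx i)
  simp only [entropyRate, shannonEntropy_congr_ae (hitin _),
    shannonEntropy_comp_measurePreserving hΦ (measurable_itinerary hS hX _)]

theorem kolmogorovSinaiEntropy_le_of_semiconj (hT : Measure.QuasiMeasurePreserving T μ μ)
    (hS : Measurable S) (hΦ : MeasurePreserving Φ μ ν) (hcomm : ∀ᵐ x ∂μ, Φ (T x) = S (Φ x)) :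
    kolmogorovSinaiEntropy ν S ≤ kolmogorovSinaiEntropy μ T := by
  refine iSup_le fun k ↦ iSup₂_le fun X hX ↦ ?_
  rw [← entropyRate_comp_of_semiconj hT hS hΦ hcomm hX]
  exact le_iSup_of_le k <| le_iSup_of_le (X ∘ Φ) <| le_iSup_of_le (hX.comp hΦ.measurable) le_rfl

/-- This is where the Lusin–Souslin theorem enters: the inverse of `Φ` is measurable. -/
theorem exists_measurePreserving_ae_leftInverse [StandardBorelSpace Ω]
    [MeasurableSpace.CountablySeparated Ω'] [Nonempty Ω] (hΦ : MeasurePreserving Φ μ ν) {N : Set Ω}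
    (hN : μ N = 0) (hinj : InjOn Φ Nᶜ) :
    ∃ Ψ : Ω' → Ω, MeasurePreserving Ψ ν μ ∧ ∀ᵐ x ∂μ, Ψ (Φ x) = x := by
  let D : Set Ω := (toMeasurable μ N)ᶜ
  have hD : MeasurableSet D := (measurableSet_toMeasurable μ N).compl
  have hD_ae : ∀ᵐ x ∂μ, x ∈ D := by
    rw [ae_iff]
    simpa [D] using hN
  have hD_inj : InjOn Φ D := hinj.mono (compl_subset_compl.2 (subset_toMeasurable μ N))
  have := hD.standardBorel
  have hemb : MeasurableEmbedding (D.domRestrict Φ) :=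
    (hΦ.measurable.comp measurable_subtype_coe).measurableEmbedding hD_inj.injective
  obtain ⟨Ψ, hΨ, hΨΦ⟩ :=
    hemb.exists_measurable_extend measurable_subtype_coe fun _ ↦ inferInstance
  have hleft : Ψ ∘ Φ =ᵐ[μ] id := hD_ae.mono fun x hx ↦ congrFun hΨΦ ⟨x, hx⟩
  refine ⟨Ψ, ⟨hΨ, ?_⟩, hleft⟩
  rw [← hΦ.map_eq, Measure.map_map hΨ hΦ.measurable, Measure.map_congr hleft,
    Measure.map_id]

theorem kolmogorovSinaiEntropy_eq_of_semiconj_of_injOn [StandardBorelSpace Ω]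
    [MeasurableSpace.CountablySeparated Ω'] [Nonempty Ω] (hT : MeasurePreserving T μ μ)
    (hS : MeasurePreserving S ν ν) (hΦ : MeasurePreserving Φ μ ν)
    (hcomm : ∀ᵐ x ∂μ, Φ (T x) = S (Φ x)) {N : Set Ω} (hN : μ N = 0) (hinj : InjOn Φ Nᶜ) :
    kolmogorovSinaiEntropy μ T = kolmogorovSinaiEntropy ν S := by
  obtain ⟨Ψ, hΨ, hleft⟩ := exists_measurePreserving_ae_leftInverse hΦ hN hinj
  have hcomm' : ∀ᵐ y ∂ν, Ψ (S y) = T (Ψ y) := by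
    have hmeas : MeasurableSet {y | Ψ (S y) = T (Ψ y)} :=
      measurableSet_eq_fun (hΨ.measurable.comp hS.measurable) (hT.measurable.comp hΨ.measurable)
    rw [← hΦ.map_eq, ae_map_iff hΦ.aemeasurable hmeas]
    filter_upwards [hcomm, hleft, hT.quasiMeasurePreserving.ae hleft] with x hx hΨx hΨTx
    rw [← hx, hΨTx, hΨx]
  exact le_antisymm
    (kolmogorovSinaiEntropy_le_of_semiconj hS.quasiMeasurePreserving hT.measurable hΨ hcomm')
    (kolmogorovSinaiEntropy_le_of_semiconj hT.quasiMeasurePreserving hS.measurable hΦ hcomm)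

end KolmogorovSinai

section MeasurableCylinders

variable {ι β : Type*} {α : ι → Type*} [∀ i, MeasurableSpace (α i)]

theorem exists_dependsOn_mem_of_mem_measurableCylinders {C : Set (∀ i, α i)}
    (hC : C ∈ measurableCylinders α) : ∃ s : Finset ι, DependsOn (· ∈ C) s := by
  obtain ⟨s, S, -, rfl⟩ := (mem_measurableCylinders C).1 hC
  refine ⟨s, fun x y hxy ↦ ?_⟩
  have : s.restrict x = s.restrict y := funext fun i ↦ hxy i i.2
  simp only [mem_cylinder, this]

theorem eq_infinitePi_of_cylinder [∀ i, Countable (α i)]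
    [∀ i, MeasurableSingletonClass (α i)] (P : ∀ i, Measure (α i)) [∀ i, IsProbabilityMeasure (P i)]
    {μ : Measure (∀ i, α i)}
    (h : ∀ (s : Finset ι) (f : ∀ i, α i), μ {x | ∀ i ∈ s, x i = f i} = ∏ i ∈ s, P i {f i}) :
    μ = Measure.infinitePi P := by
  classical
  have (i : ι) : Nonempty (α i) := nonempty_of_isProbabilityMeasure (P i)
  refine IsProjectiveLimit.unique (P := fun s : Finset ι ↦ Measure.pi fun i : s ↦ P i)
    (fun s ↦ Measure.ext_of_singleton fun w ↦ ?_) (Measure.isProjectiveLimit_infinitePi P)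
  let f : ∀ i, α i := Function.updateFinset (fun _ ↦ Classical.arbitrary _) s w
  have hf (i : s) : f i = w i := by simp [f, Function.updateFinset]
  have hpre : s.restrict ⁻¹' {w} = {x : ∀ i, α i | ∀ i ∈ s, x i = f i} := by
    ext x
    simp only [mem_preimage, mem_singleton_iff, mem_ofPred_eq, funext_iff, Subtype.forall,
      Finset.restrict_def]
    exact forall₂_congr fun i hi ↦ by rw [← hf ⟨i, hi⟩]
  rw [Measure.map_apply (Finset.measurable_restrict s) (measurableSet_singleton w), hpre, h,
    Measure.pi_singleton, ← s.prod_coe_sort fun i ↦ P i {f i}]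
  exact Finset.prod_congr rfl fun i _ ↦ by rw [hf]

theorem exists_eq_infinitePi_of_cylinder {ι α : Type*} [Nonempty ι] [Countable α]
    [MeasurableSpace α] [MeasurableSingletonClass α] {p : α → ENNReal} {μ : Measure (ι → α)}
    [IsProbabilityMeasure μ]
    (h : ∀ (s : Finset ι) (f : ι → α), μ {x | ∀ i ∈ s, x i = f i} = ∏ i ∈ s, p (f i)) :
    ∃ (P : Measure α) (_ : IsProbabilityMeasure P),
      μ = Measure.infinitePi (fun _ ↦ P) ∧ ∀ a, P {a} = p a := by
  let i₀ : ι := Classical.arbitrary ι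
  let P := μ.map fun x ↦ x i₀
  have hP (a : α) : P {a} = p a := by
    rw [Measure.map_apply (measurable_pi_apply i₀) (measurableSet_singleton a)]
    simpa [preimage] using h {i₀} fun _ ↦ a
  have : IsProbabilityMeasure P :=
    Measure.isProbabilityMeasure_map (measurable_pi_apply i₀).aemeasurable
  exact ⟨P, this, eq_infinitePi_of_cylinder _ (by simpa only [hP] using h), hP⟩

variable {μ : Measure (∀ i, α i)} [IsFiniteMeasure μ]

theorem exists_mem_measurableCylinders_measureReal_symmDiff_lt {A : Set (∀ i, α i)}
    (hA : MeasurableSet A) {ε : ℝ} (hε : 0 < ε) :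
    ∃ C ∈ measurableCylinders α, μ.real (symmDiff C A) < ε := by
  obtain ⟨C, hC, hlt⟩ := exists_measure_symmDiff_lt_of_generateFrom_isSetRing (μ := μ)
    isSetRing_measurableCylinders
    ⟨{univ}, by simp, by simpa using univ_mem_measurableCylinders α, by simp⟩
    generateFrom_measurableCylinders.symm hA (ENNReal.ofReal_pos.2 hε)
  exact ⟨C, hC, (ENNReal.lt_ofReal_iff_toReal_lt (by finiteness)).1 hlt⟩

theorem exists_dependsOn_measureReal_ne_lt [Finite β] [Nonempty β] [MeasurableSpace β]
    [MeasurableSingletonClass β] {X : (∀ i, α i) → β} (hX : Measurable X) {ε : ℝ} (hε : 0 < ε) :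
    ∃ (s : Finset ι) (Y : (∀ i, α i) → β),
      Measurable Y ∧ DependsOn Y s ∧ μ.real {x | X x ≠ Y x} < ε := by
  classical
  have := Fintype.ofFinite β
  have hcard : (0 : ℝ) < Fintype.card β := by exact_mod_cast Fintype.card_pos
  choose C hC hlt using fun b ↦ exists_mem_measurableCylinders_measureReal_symmDiff_lt (μ := μ)
    (hX (measurableSet_singleton b)) (div_pos hε hcard)
  choose s hs using fun b ↦ exists_dependsOn_mem_of_mem_measurableCylinders (hC b)
  let choice (P : β → Prop) : β := if h : ∃ b, P b then h.choose else Classical.arbitrary β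
  let Y (x : ∀ i, α i) : β := choice fun b ↦ x ∈ C b
  have hY_eq {x : ∀ i, α i} (hx : ∀ b, x ∈ C b ↔ X x = b) : Y x = X x := by
    have h : ∃ b, x ∈ C b := ⟨X x, (hx _).2 rfl⟩
    simp only [Y, choice, dif_pos h]
    exact ((hx _).1 h.choose_spec).symm
  have hsub : {x | X x ≠ Y x} ⊆ ⋃ b, symmDiff (C b) (X ⁻¹' {b}) := by
    intro x hx
    by_contra hmem
    refine hx (hY_eq fun b ↦ ?_).symm
    simp only [mem_iUnion, mem_symmDiff, mem_preimage, mem_singleton_iff, not_exists] at hmem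
    have := hmem b
    tauto
  refine ⟨Finset.univ.biUnion s, Y, ?_, fun x y hxy ↦ ?_, ?_⟩
  · refine (measurable_of_finite choice).comp (measurable_pi_lambda _ fun b ↦ ?_)
    exact measurableSet_setOfPred.1 (MeasurableSet.of_mem_measurableCylinders (hC b))
  · refine congrArg choice (funext fun b ↦ hs b fun i hi ↦ hxy i ?_)
    exact Finset.mem_coe.2 (Finset.mem_biUnion.2 ⟨b, Finset.mem_univ b, hi⟩)
  · calc μ.real {x | X x ≠ Y x} ≤ μ.real (⋃ b, symmDiff (C b) (X ⁻¹' {b})) := measureReal_mono hsub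
      _ ≤ ∑ b, μ.real (symmDiff (C b) (X ⁻¹' {b})) := measureReal_iUnion_fintype_le _
      _ < ∑ _b : β, ε / Fintype.card β :=
          Finset.sum_lt_sum_of_nonempty Finset.univ_nonempty fun b _ ↦ hlt b
      _ = ε := by simp [mul_div_cancel₀ _ hcard.ne']

end MeasurableCylinders

section FullShift

variable {α β : Type*}

/-- The full (two-sided) shift on bi-infinite words over the alphabet `α`; for `α = Fin 2` it is
`shiftPerm` by definition. -/
def fullShift (x : ℤ → α) : ℤ → α :=
  fun n ↦ x (n + 1)

theorem iterate_fullShift_apply (x : ℤ → α) (k : ℕ) (n : ℤ) : fullShift^[k] x n = x (n + k) := by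
  induction k generalizing x with
  | zero => simp
  | succ k ih =>
    rw [Function.iterate_succ_apply, ih, fullShift]
    push_cast
    rw [add_assoc]

variable [Fintype α] [MeasurableSpace α] [MeasurableSingletonClass α] {μ : Measure (ℤ → α)}
  [IsProbabilityMeasure μ]

theorem entropyRate_fullShift_le_of_dependsOn [Fintype β] [MeasurableSpace β]
    [MeasurableSingletonClass β] (hμ : MeasurePreserving fullShift μ μ) {X : (ℤ → α) → β}
    (hX : Measurable X) {s : Finset ℤ} (hs : DependsOn X s) :
    entropyRate μ fullShift X ≤ entropyRate μ fullShift (fun x ↦ x 0) := by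
  obtain ⟨k, hk⟩ : ∃ k : ℕ, ∀ j ∈ s, j.natAbs ≤ k := ⟨s.sup Int.natAbs, fun _ ↦ Finset.le_sup⟩
  have h₀ : Measurable fun x : ℤ → α ↦ x 0 := measurable_pi_apply 0
  have hfactor : (X ∘ fullShift^[k]).FactorsThrough
      (itinerary fullShift (fun x ↦ x 0) (2 * k + 1)) := by
    refine fun x y hxy ↦ hs fun j hj ↦ ?_
    have hjk := hk j hj
    have := congrFun hxy ⟨(j + k).toNat, by omega⟩
    simp only [itinerary, iterate_fullShift_apply] at this ⊢
    rwa [zero_add, Int.toNat_of_nonneg (by omega)] at this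
  calc entropyRate μ fullShift X = entropyRate μ fullShift (X ∘ fullShift^[k]) :=
        (entropyRate_comp_iterate hμ hX k).symm
    _ ≤ entropyRate μ fullShift (itinerary fullShift (fun x ↦ x 0) (2 * k + 1)) :=
        entropyRate_le_of_factorsThrough hμ (hX.comp (hμ.iterate k).measurable)
          (measurable_itinerary hμ.measurable h₀ _) hfactor
    _ ≤ entropyRate μ fullShift (fun x ↦ x 0) := entropyRate_itinerary_le hμ h₀ _

theorem entropyRate_fullShift_le_entropyRate_eval_zero {k : ℕ}
    (hμ : MeasurePreserving fullShift μ μ) {X : (ℤ → α) → Fin k} (hX : Measurable X) :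
    entropyRate μ fullShift X ≤ entropyRate μ fullShift (fun x ↦ x 0) := by
  obtain ⟨x₀⟩ : Nonempty (ℤ → α) := nonempty_of_isProbabilityMeasure μ
  have : NeZero k := ⟨(X x₀).pos.ne'⟩
  refine le_of_forall_pos_le_add fun ε hε ↦ ?_
  obtain ⟨δ, hδ, hsmall⟩ := exists_shannonEntropy_lt_of_measureReal_ne_lt (μ := μ) (0 : Fin k) hε
  obtain ⟨s, Y, hY, hYs, hXY⟩ := exists_dependsOn_measureReal_ne_lt (μ := μ) hX hδ
  have hsub : Measurable fun x ↦ X x - Y x :=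
    (measurable_of_finite fun p : Fin k × Fin k ↦ p.1 - p.2).comp (hX.prodMk hY)
  have hfactor : X.FactorsThrough fun x ↦ (Y x, X x - Y x) := by
    intro x y hxy
    rw [Prod.mk.injEq] at hxy
    calc X x = X x - Y x + Y x := (sub_add_cancel _ _).symm
      _ = X y - Y y + Y y := by rw [hxy.2, hxy.1]
      _ = X y := sub_add_cancel _ _
  calc entropyRate μ fullShift X
      ≤ entropyRate μ fullShift Y + shannonEntropy μ (fun x ↦ X x - Y x) :=
        entropyRate_le_add_shannonEntropy hμ hX hY hsub hfactor
    _ ≤ entropyRate μ fullShift (fun x ↦ x 0) + ε :=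
        add_le_add (entropyRate_fullShift_le_of_dependsOn hμ hY hYs)
          (hsmall _ hsub (by simpa only [sub_ne_zero] using hXY)).le

/-- The Kolmogorov–Sinai generator theorem, for the generator given by the zero coordinate. -/
theorem kolmogorovSinaiEntropy_fullShift (hμ : MeasurePreserving fullShift μ μ) :
    kolmogorovSinaiEntropy μ fullShift = entropyRate μ fullShift (fun x ↦ x 0) :=
  le_antisymm
    (iSup_le fun _ ↦ iSup₂_le fun _ hX ↦
      EReal.coe_le_coe_iff.2 (entropyRate_fullShift_le_entropyRate_eval_zero hμ hX))
    (entropyRate_le_kolmogorovSinaiEntropy hμ (measurable_pi_apply 0))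

end FullShift

section Bernoulli

variable {α : Type*} [MeasurableSpace α]

theorem measurePreserving_fullShift_infinitePi (P : Measure α) [IsProbabilityMeasure P] :
    MeasurePreserving fullShift (Measure.infinitePi fun _ : ℤ ↦ P)
      (Measure.infinitePi fun _ : ℤ ↦ P) :=
  ⟨measurable_pi_lambda _ fun n ↦ measurable_pi_apply (n + 1),
    Measure.map_infinitePi_infinitePi_of_inj (add_left_injective (1 : ℤ))⟩

variable [Fintype α] [MeasurableSingletonClass α]

theorem shannonEntropy_itinerary_fullShift_infinitePi (P : Measure α) [IsProbabilityMeasure P]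
    (n : ℕ) :
    shannonEntropy (Measure.infinitePi fun _ : ℤ ↦ P) (itinerary fullShift (fun x ↦ x 0) n) =
      n * ∑ a, negMulLog (P.real {a}) := by
  have hword : itinerary fullShift (fun x : ℤ → α ↦ x 0) n = fun x i ↦ x (i : ℕ) := by
    ext x i
    simp only [itinerary, iterate_fullShift_apply, zero_add]
  have hinj : Function.Injective fun i : Fin n ↦ ((i : ℕ) : ℤ) :=
    Nat.cast_injective.comp Fin.val_injective
  have hlaw : (Measure.infinitePi fun _ : ℤ ↦ P).map (fun x (i : Fin n) ↦ x (i : ℕ)) =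
      Measure.pi fun _ ↦ P := by
    rw [Measure.map_infinitePi_infinitePi_of_inj (P := fun _ : ℤ ↦ P) hinj,
      Measure.infinitePi_eq_pi]
  have hmeas : Measurable fun (x : ℤ → α) (i : Fin n) ↦ x (i : ℕ) := by fun_prop
  have hmass (w : Fin n → α) : (Measure.infinitePi fun _ : ℤ ↦ P).real
      ((fun x (i : Fin n) ↦ x (i : ℕ)) ⁻¹' {w}) = ∏ i, P.real {w i} := by
    rw [← map_measureReal_apply hmeas (measurableSet_singleton w), hlaw, measureReal_def,
      Measure.pi_singleton, ENNReal.toReal_prod]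
    rfl
  rw [hword, shannonEntropy, Finset.sum_congr rfl fun w _ ↦ congrArg negMulLog (hmass w)]
  have hsum : ∑ a, P.real {a} = 1 := by simp
  exact sum_negMulLog_prod hsum n

theorem kolmogorovSinaiEntropy_fullShift_infinitePi (P : Measure α) [IsProbabilityMeasure P] :
    kolmogorovSinaiEntropy (Measure.infinitePi fun _ : ℤ ↦ P) fullShift =
      (∑ a, negMulLog (P.real {a}) : ℝ) := by
  have hP := measurePreserving_fullShift_infinitePi P
  rw [kolmogorovSinaiEntropy_fullShift hP, EReal.coe_eq_coe_iff]
  refine tendsto_nhds_unique (tendsto_entropyRate hP (measurable_pi_apply 0)) ?_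
  refine tendsto_const_nhds.congr' ((eventually_ne_atTop 0).mono fun n hn ↦ ?_)
  simp only [shannonEntropy_itinerary_fullShift_infinitePi,
    mul_div_cancel_left₀ _ (Nat.cast_ne_zero (R := ℝ).2 hn)]

theorem sum_negMulLog_ite_ofReal {r : ℝ} (hr : r ∈ Icc 0 1) :
    ∑ a : Fin 2, negMulLog (if a = 0 then ENNReal.ofReal r else ENNReal.ofReal (1 - r)).toReal =
      Real.binEntropy r := by
  simp [Fin.sum_univ_two, Real.binEntropy_eq_negMulLog_add_negMulLog_one_sub,
    ENNReal.toReal_ofReal hr.1, ENNReal.toReal_ofReal (sub_nonneg.2 hr.2)]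

theorem injOn_sum_negMulLog_ite_ofReal :
    InjOn (fun r : ℝ ↦ ∑ a : Fin 2,
      negMulLog (if a = 0 then ENNReal.ofReal r else ENNReal.ofReal (1 - r)).toReal)
      (Icc 0 (1 / 2)) := by
  have hsub : Icc (0 : ℝ) (1 / 2) ⊆ Icc 0 1 := Icc_subset_Icc_right (by norm_num)
  refine InjOn.congr ?_ fun r hr ↦ (sum_negMulLog_ite_ofReal (hsub hr)).symm
  rw [one_div]
  exact Real.binEntropy_strictMonoOn.injOn

end Bernoulli

theorem stmt8_general {α β : Type*} [Fintype α] [MeasurableSpace α] [MeasurableSingletonClass α]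
    [Fintype β] [MeasurableSpace β] [MeasurableSingletonClass β] {p : α → ENNReal}
    {q : β → ENNReal} (μ : Measure (ℤ → α)) (ν : Measure (ℤ → β)) [IsProbabilityMeasure μ]
    [IsProbabilityMeasure ν]
    (hμ : ∀ (s : Finset ℤ) (f : ℤ → α), μ {x | ∀ i ∈ s, x i = f i} = ∏ i ∈ s, p (f i))
    (hν : ∀ (s : Finset ℤ) (f : ℤ → β), ν {x | ∀ i ∈ s, x i = f i} = ∏ i ∈ s, q (f i))
    (hpq : ∑ a, negMulLog (p a).toReal ≠ ∑ b, negMulLog (q b).toReal) :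
    ¬ ∃ Φ : (ℤ → α) → (ℤ → β), Measurable Φ ∧ Measure.map Φ μ = ν ∧
      (∃ N : Set (ℤ → α), μ N = 0 ∧ InjOn Φ Nᶜ) ∧
      ∀ᵐ x ∂μ, Φ (fullShift x) = fullShift (Φ x) := by
  obtain ⟨P, _, rfl, hP⟩ := exists_eq_infinitePi_of_cylinder hμ
  obtain ⟨Q, _, rfl, hQ⟩ := exists_eq_infinitePi_of_cylinder hν
  rintro ⟨Φ, hΦ, hmap, ⟨N, hN, hinj⟩, hcomm⟩
  have : Nonempty (ℤ → α) :=
    nonempty_of_isProbabilityMeasure (Measure.infinitePi fun _ : ℤ ↦ P)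
  have h := kolmogorovSinaiEntropy_eq_of_semiconj_of_injOn
    (measurePreserving_fullShift_infinitePi P) (measurePreserving_fullShift_infinitePi Q)
    ⟨hΦ, hmap⟩ hcomm hN hinj
  rw [kolmogorovSinaiEntropy_fullShift_infinitePi, kolmogorovSinaiEntropy_fullShift_infinitePi,
    EReal.coe_eq_coe_iff] at h
  exact hpq (by simpa only [measureReal_def, hP, hQ] using h)

/-- For `r ≠ r'` in `(0, 1/2]`, the Bernoulli shifts of parameters `r` and `r'`
(on the product probability spaces `{0,1}^ℤ`, characterized by their values on cylinder sets)
are not conjugate. -/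
theorem stmt8 (r r' : ℝ) (hr : r ∈ Set.Ioc (0:ℝ) (1/2)) (hr' : r' ∈ Set.Ioc (0:ℝ) (1/2))
    (hne : r ≠ r')
    (μ μ' : Measure (ℤ → Fin 2)) [IsProbabilityMeasure μ] [IsProbabilityMeasure μ']
    (hcyl : ∀ (s : Finset ℤ) (f : ℤ → Fin 2),
      μ {x : ℤ → Fin 2 | ∀ i ∈ s, x i = f i} =
        ∏ i ∈ s, (if f i = 0 then ENNReal.ofReal r else ENNReal.ofReal (1 - r)))
    (hcyl' : ∀ (s : Finset ℤ) (f : ℤ → Fin 2),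
      μ' {x : ℤ → Fin 2 | ∀ i ∈ s, x i = f i} =
        ∏ i ∈ s, (if f i = 0 then ENNReal.ofReal r' else ENNReal.ofReal (1 - r'))) :
    ¬ ∃ Φ : (ℤ → Fin 2) → (ℤ → Fin 2), Measurable Φ ∧
        Measure.map Φ μ = μ' ∧
        (∃ N : Set (ℤ → Fin 2), μ N = 0 ∧ Set.InjOn Φ Nᶜ) ∧
        μ' (Set.range Φ)ᶜ = 0 ∧
        ∀ᵐ x ∂μ, Φ (shiftPerm x) = shiftPerm (Φ x) := by
  rintro ⟨Φ, hΦ, hmap, hinj, -, hcomm⟩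
  exact stmt8_general μ μ' hcyl hcyl' (injOn_sum_negMulLog_ite_ofReal.ne
    (Ioc_subset_Icc_self hr) (Ioc_subset_Icc_self hr') hne) ⟨Φ, hΦ, hmap, hinj, hcomm⟩
end

section
/- Let (X, μ) be a σ-finite measure space and H = L²(X × ℝ, μ ⊗ λ, ℂ) with λ Lebesgue measure on ℝ. For μ', ξ ∈ L²(ℝ, ℂ) let Θ_{μ', ξ} be the bounded operator on H given by (Θ_{μ', ξ} F)(x, t) = μ'(t) · ∫_ℝ F(x, r) · conj(ξ(r)) dr. Let (v_n) be a sequence of bounded operators on H with sup_n ‖v_n‖ < ∞ such that for all μ', ξ ∈ L²(ℝ, ℂ), both the commutators [v_n, Θ_{μ', ξ}] and [v_n*, Θ_{μ', ξ}] converge to 0 in the strong operator topology as n → ∞. Fix a unit vector ξ₀ ∈ L²(ℝ, ℂ) and define w_n on L²(X, μ, ℂ) by (w_n g)(x) = ∫_ℝ (v_n (g ⊗ ξ₀))(x, r) · conj(ξ₀(r)) dr, where (g ⊗ ξ₀)(x, t) = g(x) ξ₀(t). Then each w_n is bounded with ‖w_n‖ ≤ ‖v_n‖, the fiberwise operator w_n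 ⊗ 1 on H defined by ((w_n ⊗ 1)F)(·, t) = w_n(F(·, t)) is bounded, and v_n − (w_n ⊗ 1) → 0 and v_n* − (w_n* ⊗ 1) → 0 in the strong operator topology. -/
open MeasureTheory Filter Topology

/-!
For a unit vector `ξ₀` let `w` be the compression of `v` by `ξ₀`. Applying a commutator to a vector
`g ⊗ ξ₀` gives `[v, 1 ⊗ |η⟩⟨ξ₀|] (g ⊗ ξ₀) = (v - w ⊗ 1) (g ⊗ η)`, so asymptotic commutation with
the rank-one operators yields `v - w ⊗ 1 → 0` on elementary tensors. These span a dense subspace,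
and the operators `v - w ⊗ 1` are uniformly bounded, so the convergence holds on all of `H`. Both
compression and amplification commute with taking adjoints, hence the same argument applied to `v*`
gives the convergence of the adjoints.
-/

open ContinuousLinearMap (adjoint)
open scoped InnerProductSpace TensorProduct ComplexConjugate

theorem tendsto_zero_of_dense_of_norm_le {𝕜 E F ι : Type*} [NontriviallyNormedField 𝕜]
    [SeminormedAddCommGroup E] [NormedSpace 𝕜 E] [SeminormedAddCommGroup F] [NormedSpace 𝕜 F]
    {l : Filter ι} {A : ι → E →L[𝕜] F} (hA : ∃ C, ∀ i, ‖A i‖ ≤ C) {s : Set E} (hs : Dense s)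
    (h : ∀ x ∈ s, Tendsto (fun i ↦ A i x) l (𝓝 0)) (x : E) :
    Tendsto (fun i ↦ A i x) l (𝓝 0) := by
  have hequi : Equicontinuous fun i ↦ (A i : E → F) :=
    ((NormedSpace.equicontinuous_TFAE A).out 5 1).1 hA
  have hclosed : IsClosed {x | Tendsto (fun i ↦ A i x) l (𝓝 0)} :=
    hequi.isClosed_setOfPred_tendsto continuous_const
  exact hclosed.closure_subset_iff.2 h (hs x)

section HilbertTensor

variable {𝕜 K L H ι : Type*} [RCLike 𝕜]
  [NormedAddCommGroup K] [InnerProductSpace 𝕜 K] [NormedAddCommGroup L] [InnerProductSpace 𝕜 L]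
  [NormedAddCommGroup H] [InnerProductSpace 𝕜 H] {U : K ⊗[𝕜] L →ₗᵢ[𝕜] H}

variable (U) in
/-- The creation operator `g ↦ g ⊗ ξ`. Here and below, a Hilbert tensor product of `K` and `L` is
encoded as a linear isometry `U` with dense range from the algebraic tensor product into `H`. -/
noncomputable def tensorRight (ξ : L) : K →L[𝕜] H :=
  U.toContinuousLinearMap ∘L (TensorProduct.mkL 𝕜 K L).flip ξ

theorem tensorRight_apply (ξ : L) (g : K) : tensorRight U ξ g = U (g ⊗ₜ ξ) := rfl

theorem norm_tensorRight_le (ξ : L) : ‖tensorRight U ξ‖ ≤ ‖ξ‖ :=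
  ContinuousLinearMap.opNorm_le_bound _ (norm_nonneg ξ) fun g ↦ by
    rw [tensorRight_apply, U.norm_map, TensorProduct.norm_tmul, mul_comm]

theorem norm_map_rTensor_le (w : K →L[𝕜] K) (x : K ⊗[𝕜] L) :
    ‖U (w.rTensor L x)‖ ≤ ‖w‖ * ‖U x‖ := by
  rw [U.norm_map, U.norm_map]
  exact (w.rTensor L).le_of_opNorm_le (w.norm_rTensor_le L) x

theorem tendsto_zero_of_tendsto_tmul (hU : DenseRange U) {l : Filter ι} {A : ι → H →L[𝕜] H}
    (hA : ∃ C, ∀ i, ‖A i‖ ≤ C)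
    (h : ∀ g ξ, Tendsto (fun i ↦ A i (U (g ⊗ₜ ξ))) l (𝓝 0)) (F : H) :
    Tendsto (fun i ↦ A i F) l (𝓝 0) := by
  refine tendsto_zero_of_dense_of_norm_le hA hU (Set.forall_mem_range.2 fun x ↦ ?_) F
  induction x with
  | zero => simpa only [map_zero] using tendsto_const_nhds
  | tmul g ξ => exact h g ξ
  | add x y hx hy => simpa only [map_add, add_zero] using hx.add hy

variable [CompleteSpace H]

variable (U) in
/-- The amplification `w ⊗ 1` of an operator `w` on `K`, extended from the algebraic tensor
product by continuity; it is a junk value if the range of `U` is not dense. -/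
noncomputable def amplify (w : K →L[𝕜] K) : H →L[𝕜] H :=
  (U.toLinearMap ∘ₗ (w.rTensor L).toLinearMap).extendOfNorm U.toLinearMap

theorem amplify_map (hU : DenseRange U) (w : K →L[𝕜] K) (x : K ⊗[𝕜] L) :
    amplify U w (U x) = U (w.rTensor L x) :=
  LinearMap.extendOfNorm_eq hU ⟨‖w‖, norm_map_rTensor_le w⟩ x

theorem amplify_tmul (hU : DenseRange U) (w : K →L[𝕜] K) (g : K) (ξ : L) :
    amplify U w (U (g ⊗ₜ ξ)) = U (w g ⊗ₜ ξ) :=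
  amplify_map hU w _

theorem norm_amplify_le (hU : DenseRange U) (w : K →L[𝕜] K) : ‖amplify U w‖ ≤ ‖w‖ :=
  LinearMap.opNorm_extendOfNorm_le hU (norm_nonneg w) (norm_map_rTensor_le w)

variable [CompleteSpace K]

theorem inner_rTensor_adjoint_left (w : K →L[𝕜] K) (x y : K ⊗[𝕜] L) :
    ⟪(adjoint w).rTensor L x, y⟫_𝕜 = ⟪x, w.rTensor L y⟫_𝕜 := by
  induction x with
  | zero => simp only [map_zero, inner_zero_left]
  | add x x' hx hx' => simp only [map_add, inner_add_left, hx, hx']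
  | tmul g ξ =>
    induction y with
    | zero => simp only [map_zero, inner_zero_right]
    | add y y' hy hy' => simp only [map_add, inner_add_right, hy, hy']
    | tmul g' ξ' =>
      simp only [ContinuousLinearMap.rTensor_tmul, TensorProduct.inner_tmul,
        ContinuousLinearMap.adjoint_inner_left]

theorem amplify_adjoint (hU : DenseRange U) (w : K →L[𝕜] K) :
    amplify U (adjoint w) = adjoint (amplify U w) := by
  refine (ContinuousLinearMap.eq_adjoint_iff _ _).2 fun F G ↦ ?_
  refine hU.induction_on₂ (isClosed_eq (by fun_prop) (by fun_prop)) (fun x y ↦ ?_) F G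
  rw [amplify_map hU, amplify_map hU, U.inner_map_map, U.inner_map_map,
    inner_rTensor_adjoint_left]

theorem adjoint_tensorRight_tmul (ξ η : L) (g : K) :
    adjoint (tensorRight U ξ) (U (g ⊗ₜ η)) = ⟪ξ, η⟫_𝕜 • g :=
  ext_inner_left 𝕜 fun g' ↦ by
    rw [ContinuousLinearMap.adjoint_inner_right, tensorRight_apply, U.inner_map_map,
      TensorProduct.inner_tmul, inner_smul_right, mul_comm]

variable (U) in
/-- The amplification `1 ⊗ |η⟩⟨ξ|` of the rank-one operator `h ↦ ⟪ξ, h⟫ η` on `L`. -/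
noncomputable def amplifyRankOne (η ξ : L) : H →L[𝕜] H :=
  tensorRight U η ∘L adjoint (tensorRight U ξ)

variable (U) in
/-- The compression of `v` by the vector `ξ`: the operator on `K` with matrix coefficients
`⟪g', w g⟫ = ⟪g' ⊗ ξ, v (g ⊗ ξ)⟫`. -/
noncomputable def compression (ξ : L) (v : H →L[𝕜] H) : K →L[𝕜] K :=
  adjoint (tensorRight U ξ) ∘L v ∘L tensorRight U ξ

theorem compression_apply (ξ : L) (v : H →L[𝕜] H) (g : K) :
    compression U ξ v g = adjoint (tensorRight U ξ) (v (U (g ⊗ₜ ξ))) := rfl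

theorem compression_adjoint (ξ : L) (v : H →L[𝕜] H) :
    compression U ξ (adjoint v) = adjoint (compression U ξ v) := by
  simp only [compression, ContinuousLinearMap.adjoint_comp, ContinuousLinearMap.adjoint_adjoint,
    ContinuousLinearMap.comp_assoc]

theorem norm_compression_le (ξ : L) (v : H →L[𝕜] H) :
    ‖compression U ξ v‖ ≤ ‖ξ‖ ^ 2 * ‖v‖ := by
  calc ‖compression U ξ v‖
      ≤ ‖adjoint (tensorRight U ξ)‖ * (‖v‖ * ‖tensorRight U ξ‖) :=
        (ContinuousLinearMap.opNorm_comp_le _ _).trans <| by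
          gcongr; exact ContinuousLinearMap.opNorm_comp_le _ _
    _ ≤ ‖ξ‖ * (‖v‖ * ‖ξ‖) := by
        rw [LinearIsometryEquiv.norm_map]
        gcongr <;> exact norm_tensorRight_le ξ
    _ = ‖ξ‖ ^ 2 * ‖v‖ := by ring

theorem commutator_amplifyRankOne_tmul (hU : DenseRange U) {ξ : L} (hξ : ‖ξ‖ = 1)
    (v : H →L[𝕜] H) (g : K) (η : L) :
    v (amplifyRankOne U η ξ (U (g ⊗ₜ ξ))) - amplifyRankOne U η ξ (v (U (g ⊗ₜ ξ))) =
      (v - amplify U (compression U ξ v)) (U (g ⊗ₜ η)) := by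
  have hξξ : ⟪ξ, ξ⟫_𝕜 = 1 := inner_self_eq_one_of_norm_eq_one hξ
  simp only [amplifyRankOne, ContinuousLinearMap.comp_apply, sub_apply,
    adjoint_tensorRight_tmul, hξξ, one_smul, tensorRight_apply, amplify_tmul hU, compression_apply]

theorem tendsto_sub_amplify_compression (hU : DenseRange U) {l : Filter ι} {v : ι → H →L[𝕜] H}
    (hv : ∃ C, ∀ i, ‖v i‖ ≤ C) {ξ : L} (hξ : ‖ξ‖ = 1)
    (hcomm : ∀ η F, Tendsto
      (fun i ↦ v i (amplifyRankOne U η ξ F) - amplifyRankOne U η ξ (v i F)) l (𝓝 0)) (F : H) :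
    Tendsto (fun i ↦ v i F - amplify U (compression U ξ (v i)) F) l (𝓝 0) := by
  have hbdd : ∃ C, ∀ i, ‖v i - amplify U (compression U ξ (v i))‖ ≤ C := by
    obtain ⟨C, hC⟩ := hv
    refine ⟨C + C, fun i ↦ (norm_sub_le _ _).trans (add_le_add (hC i) ?_)⟩
    calc ‖amplify U (compression U ξ (v i))‖
        ≤ ‖compression U ξ (v i)‖ := norm_amplify_le hU _
      _ ≤ ‖ξ‖ ^ 2 * ‖v i‖ := norm_compression_le ξ _
      _ ≤ C := by simpa only [hξ, one_pow, one_mul] using hC i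
  refine tendsto_zero_of_tendsto_tmul hU hbdd (fun g η ↦ ?_) F
  simpa only [commutator_amplifyRankOne_tmul hU hξ] using hcomm η (U (g ⊗ₜ ξ))

end HilbertTensor

theorem ae_eq_zero_of_forall_setIntegral_eq_zero_of_isPiSystem {α E : Type*}
    [mα : MeasurableSpace α] {μ : Measure α} [NormedAddCommGroup E] [NormedSpace ℝ E]
    [CompleteSpace E] {C : Set (Set α)} (hgen : mα = MeasurableSpace.generateFrom C)
    (hC : IsPiSystem C) (S : μ.FiniteSpanningSetsIn C) {f : α → E}
    (hint : ∀ s ∈ C, μ s < ⊤ → IntegrableOn f s μ)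
    (hzero : ∀ s ∈ C, μ s < ⊤ → ∫ x in s, f x ∂μ = 0) : f =ᵐ[μ] 0 := by
  suffices ∀ n, f =ᵐ[μ.restrict (S.set n)] 0 by
    simpa only [S.spanning, Measure.restrict_univ] using
      (ae_eq_restrict_iUnion_iff S.set f 0).2 this
  intro n
  have hmeas {s : Set α} (hs : s ∈ C) : MeasurableSet s :=
    hgen ▸ MeasurableSpace.measurableSet_generateFrom hs
  have hintn : Integrable f (μ.restrict (S.set n)) := hint _ (S.set_mem n) (S.finite n)
  refine hintn.ae_eq_of_withDensityᵥ_eq (integrable_zero _ _ _)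
    (VectorMeasure.ext_of_generateFrom C (fun s hs ↦ ?_) hgen hC ?_)
  · rw [withDensityᵥ_apply hintn (hmeas hs), withDensityᵥ_zero, zero_apply,
      Measure.restrict_restrict (hmeas hs)]
    rcases (s ∩ S.set n).eq_empty_or_nonempty with hempty | hne
    · rw [hempty, setIntegral_empty]
    · exact hzero _ (hC s hs _ (S.set_mem n) hne)
        ((measure_mono Set.inter_subset_right).trans_lt (S.finite n))
  · rw [withDensityᵥ_apply hintn MeasurableSet.univ, withDensityᵥ_zero, zero_apply,
      setIntegral_univ, hzero _ (S.set_mem n) (S.finite n)]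

section L2Tensor

variable {𝕜 X Y : Type*} [RCLike 𝕜] [MeasurableSpace X] [MeasurableSpace Y]
  {μ : Measure X} {ν : Measure Y}

theorem ae_eq_prod_fst {β : Type*} {f g : X → β} (h : f =ᵐ[μ] g) :
    (fun z : X × Y ↦ f z.1) =ᵐ[μ.prod ν] fun z ↦ g z.1 :=
  Measure.quasiMeasurePreserving_fst.ae_eq_comp h

theorem ae_eq_prod_snd {β : Type*} {f g : Y → β} (h : f =ᵐ[ν] g) :
    (fun z : X × Y ↦ f z.2) =ᵐ[μ.prod ν] fun z ↦ g z.2 :=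
  Measure.quasiMeasurePreserving_snd.ae_eq_comp h

theorem memLp_mul_prod {p : ENNReal} (hp : p ≠ 0) (hp' : p ≠ ⊤) {f : X → 𝕜} {g : Y → 𝕜}
    (hf : MemLp f p μ) (hg : MemLp g p ν) : MemLp (fun z : X × Y ↦ f z.1 * g z.2) p (μ.prod ν) := by
  have hmeas : AEStronglyMeasurable (fun z : X × Y ↦ f z.1 * g z.2) (μ.prod ν) :=
    hf.1.comp_fst.mul hg.1.comp_snd
  rw [← integrable_norm_rpow_iff hmeas hp hp']
  simpa only [norm_mul, Real.mul_rpow (norm_nonneg _) (norm_nonneg _)] using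
    (hf.integrable_norm_rpow hp hp').mul_prod (hg.integrable_norm_rpow hp hp')

/-- The elementary tensor `(x, y) ↦ g x * ξ y` of two square-integrable functions. -/
noncomputable def elemTensor (g : Lp 𝕜 2 μ) (ξ : Lp 𝕜 2 ν) : Lp 𝕜 2 (μ.prod ν) :=
  (memLp_mul_prod two_ne_zero ENNReal.ofNat_ne_top (Lp.memLp g) (Lp.memLp ξ)).toLp

theorem coeFn_elemTensor (g : Lp 𝕜 2 μ) (ξ : Lp 𝕜 2 ν) :
    elemTensor g ξ =ᵐ[μ.prod ν] fun z ↦ g z.1 * ξ z.2 :=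
  MemLp.coeFn_toLp _

theorem elemTensor_eq_of_ae_eq {g : Lp 𝕜 2 μ} {ξ : Lp 𝕜 2 ν} {F : Lp 𝕜 2 (μ.prod ν)}
    (h : F =ᵐ[μ.prod ν] fun z ↦ g z.1 * ξ z.2) : elemTensor g ξ = F :=
  Lp.ext ((coeFn_elemTensor g ξ).trans h.symm)

variable (𝕜 μ ν) in
/-- The elementary tensor as a bilinear map, from which the algebraic tensor product is mapped into
`L²(μ × ν)`. -/
noncomputable def elemTensorₗ : Lp 𝕜 2 μ →ₗ[𝕜] Lp 𝕜 2 ν →ₗ[𝕜] Lp 𝕜 2 (μ.prod ν) :=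
  LinearMap.mk₂ 𝕜 elemTensor
    (fun g g' ξ ↦ elemTensor_eq_of_ae_eq <| by
      filter_upwards [Lp.coeFn_add (elemTensor g ξ) (elemTensor g' ξ), coeFn_elemTensor g ξ,
        coeFn_elemTensor g' ξ, ae_eq_prod_fst (Lp.coeFn_add g g')] with z h₁ h₂ h₃ h₄
      rw [h₁, Pi.add_apply, h₂, h₃, h₄, Pi.add_apply, add_mul])
    (fun c g ξ ↦ elemTensor_eq_of_ae_eq <| by
      filter_upwards [Lp.coeFn_smul c (elemTensor g ξ), coeFn_elemTensor g ξ,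
        ae_eq_prod_fst (Lp.coeFn_smul c g)] with z h₁ h₂ h₃
      rw [h₁, Pi.smul_apply, h₂, h₃, Pi.smul_apply, smul_mul_assoc])
    (fun g ξ ξ' ↦ elemTensor_eq_of_ae_eq <| by
      filter_upwards [Lp.coeFn_add (elemTensor g ξ) (elemTensor g ξ'), coeFn_elemTensor g ξ,
        coeFn_elemTensor g ξ', ae_eq_prod_snd (Lp.coeFn_add ξ ξ')] with z h₁ h₂ h₃ h₄
      rw [h₁, Pi.add_apply, h₂, h₃, h₄, Pi.add_apply, mul_add])
    (fun c g ξ ↦ elemTensor_eq_of_ae_eq <| by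
      filter_upwards [Lp.coeFn_smul c (elemTensor g ξ), coeFn_elemTensor g ξ,
        ae_eq_prod_snd (Lp.coeFn_smul c ξ)] with z h₁ h₂ h₃
      rw [h₁, Pi.smul_apply, h₂, h₃, Pi.smul_apply, mul_smul_comm])

theorem elemTensor_indicatorConstLp {s : Set X} {t : Set Y} (hs : MeasurableSet s)
    (ht : MeasurableSet t) (hμs : μ s ≠ ⊤) (hνt : ν t ≠ ⊤) (hst : μ.prod ν (s ×ˢ t) ≠ ⊤) :
    elemTensor (indicatorConstLp 2 hs hμs (1 : 𝕜)) (indicatorConstLp 2 ht hνt 1) =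
      indicatorConstLp 2 (hs.prod ht) hst 1 := by
  refine elemTensor_eq_of_ae_eq ?_
  filter_upwards [indicatorConstLp_coeFn (p := 2) (hs := hs.prod ht) (hμs := hst) (c := (1 : 𝕜)),
    ae_eq_prod_fst (indicatorConstLp_coeFn (p := 2) (hs := hs) (hμs := hμs) (c := (1 : 𝕜))),
    ae_eq_prod_snd (indicatorConstLp_coeFn (p := 2) (hs := ht) (hμs := hνt) (c := (1 : 𝕜)))]
    with z h₁ h₂ h₃
  rw [h₁, h₂, h₃]
  exact Set.indicator_prod_one

theorem inner_coeFn_elemTensor_ae_eq (F : Lp 𝕜 2 (μ.prod ν)) (g : Lp 𝕜 2 μ) (ξ : Lp 𝕜 2 ν) :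
    (fun z ↦ ⟪elemTensor g ξ z, F z⟫_𝕜) =ᵐ[μ.prod ν]
      fun z ↦ conj (g z.1) * (F z * conj (ξ z.2)) := by
  filter_upwards [coeFn_elemTensor g ξ] with z hz
  rw [hz, RCLike.inner_apply, map_mul]
  ring

theorem integrable_conj_mul_integral_mul_conj [SFinite ν] (F : Lp 𝕜 2 (μ.prod ν))
    (g : Lp 𝕜 2 μ) (ξ : Lp 𝕜 2 ν) :
    Integrable (fun x ↦ conj (g x) * ∫ y, F (x, y) * conj (ξ y) ∂ν) μ := by
  have hint := (L2.integrable_inner (𝕜 := 𝕜) (elemTensor g ξ) F).congr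
    (inner_coeFn_elemTensor_ae_eq F g ξ)
  simpa only [integral_const_mul] using hint.integral_prod_left

section SFinite

variable [SFinite μ] [SFinite ν]

theorem inner_elemTensor_elemTensor (g g' : Lp 𝕜 2 μ) (ξ ξ' : Lp 𝕜 2 ν) :
    ⟪elemTensor g ξ, elemTensor g' ξ'⟫_𝕜 = ⟪g, g'⟫_𝕜 * ⟪ξ, ξ'⟫_𝕜 := by
  rw [L2.inner_def, L2.inner_def, L2.inner_def, ← integral_prod_mul]
  refine integral_congr_ae ?_
  filter_upwards [coeFn_elemTensor g ξ, coeFn_elemTensor g' ξ'] with z hz hz'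
  rw [hz, hz']
  simp only [RCLike.inner_apply, map_mul]
  ring

theorem inner_lift_elemTensorₗ (x y : Lp 𝕜 2 μ ⊗[𝕜] Lp 𝕜 2 ν) :
    ⟪TensorProduct.lift (elemTensorₗ 𝕜 μ ν) x, TensorProduct.lift (elemTensorₗ 𝕜 μ ν) y⟫_𝕜 =
      ⟪x, y⟫_𝕜 := by
  induction x with
  | zero => simp only [map_zero, inner_zero_left]
  | add x x' hx hx' => simp only [map_add, inner_add_left, hx, hx']
  | tmul g ξ =>
    induction y with
    | zero => simp only [map_zero, inner_zero_right]
    | add y y' hy hy' => simp only [map_add, inner_add_right, hy, hy']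
    | tmul g' ξ' => exact inner_elemTensor_elemTensor g g' ξ ξ'

variable (𝕜 μ ν) in
/-- The isometry `L²(μ) ⊗ L²(ν) → L²(μ × ν)` exhibiting `L²(μ × ν)` as a Hilbert tensor
product. -/
noncomputable def tensorIsometry : Lp 𝕜 2 μ ⊗[𝕜] Lp 𝕜 2 ν →ₗᵢ[𝕜] Lp 𝕜 2 (μ.prod ν) :=
  (TensorProduct.lift (elemTensorₗ 𝕜 μ ν)).isometryOfInner inner_lift_elemTensorₗ

theorem tensorIsometry_tmul (g : Lp 𝕜 2 μ) (ξ : Lp 𝕜 2 ν) :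
    tensorIsometry 𝕜 μ ν (g ⊗ₜ ξ) = elemTensor g ξ := rfl

theorem inner_elemTensor_left (F : Lp 𝕜 2 (μ.prod ν)) (g : Lp 𝕜 2 μ) (ξ : Lp 𝕜 2 ν) :
    ⟪elemTensor g ξ, F⟫_𝕜 = ∫ x, conj (g x) * ∫ y, F (x, y) * conj (ξ y) ∂ν ∂μ := by
  have hint := (L2.integrable_inner (𝕜 := 𝕜) (elemTensor g ξ) F).congr
    (inner_coeFn_elemTensor_ae_eq F g ξ)
  rw [L2.inner_def, integral_congr_ae (inner_coeFn_elemTensor_ae_eq F g ξ),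
    integral_prod _ hint]
  simp only [integral_const_mul]

end SFinite

section SigmaFinite

variable [SigmaFinite μ]

theorem adjoint_tensorRight_tensorIsometry [SFinite ν] (ξ : Lp 𝕜 2 ν) (F : Lp 𝕜 2 (μ.prod ν)) :
    adjoint (tensorRight (tensorIsometry 𝕜 μ ν) ξ) F =ᵐ[μ]
      fun x ↦ ∫ y, F (x, y) * conj (ξ y) ∂ν := by
  have hind {s : Set X} (hs : MeasurableSet s) (hμs : μ s < ⊤) :
      (fun x ↦ conj (indicatorConstLp 2 hs hμs.ne (1 : 𝕜) x) * ∫ y, F (x, y) * conj (ξ y) ∂ν)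
        =ᵐ[μ] s.indicator fun x ↦ ∫ y, F (x, y) * conj (ξ y) ∂ν := by
    filter_upwards [indicatorConstLp_coeFn (p := 2) (hs := hs) (hμs := hμs.ne) (c := (1 : 𝕜))]
      with x hx
    rw [hx]
    by_cases hxs : x ∈ s <;> simp [hxs]
  refine ae_eq_of_forall_setIntegral_eq_of_sigmaFinite (fun s _ hμs ↦ ?_) (fun s hs hμs ↦ ?_)
    fun s hs hμs ↦ ?_
  · exact integrableOn_Lp_of_measure_ne_top _ Fact.out hμs.ne
  · rw [← integrable_indicator_iff hs]
    exact (integrable_conj_mul_integral_mul_conj F _ ξ).congr (hind hs hμs)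
  · rw [← L2.inner_indicatorConstLp_one (𝕜 := 𝕜) hs hμs.ne,
      ContinuousLinearMap.adjoint_inner_right, tensorRight_apply, tensorIsometry_tmul,
      inner_elemTensor_left, integral_congr_ae (hind hs hμs), integral_indicator hs]

theorem amplifyRankOne_tensorIsometry [SFinite ν] (η ξ : Lp 𝕜 2 ν) (F : Lp 𝕜 2 (μ.prod ν)) :
    amplifyRankOne (tensorIsometry 𝕜 μ ν) η ξ F =ᵐ[μ.prod ν]
      fun z ↦ η z.2 * ∫ y, F (z.1, y) * conj (ξ y) ∂ν := by
  filter_upwards [coeFn_elemTensor (adjoint (tensorRight (tensorIsometry 𝕜 μ ν) ξ) F) η,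
    ae_eq_prod_fst (adjoint_tensorRight_tensorIsometry ξ F)] with z h₁ h₂
  rw [mul_comm, ← h₂]
  exact h₁

theorem eq_zero_of_inner_elemTensor_eq_zero [SigmaFinite ν] {F : Lp 𝕜 2 (μ.prod ν)}
    (hF : ∀ g ξ, ⟪elemTensor g ξ, F⟫_𝕜 = 0) : F = 0 := by
  rw [Lp.eq_zero_iff_ae_eq_zero]
  refine ae_eq_zero_of_forall_setIntegral_eq_zero_of_isPiSystem generateFrom_prod.symm
    isPiSystem_prod (μ.toFiniteSpanningSetsIn.prod ν.toFiniteSpanningSetsIn)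
    (fun r _ hr ↦ integrableOn_Lp_of_measure_ne_top _ Fact.out hr.ne) ?_
  rintro _ ⟨s, hs, t, ht, rfl⟩ hst
  have hmul := Measure.prod_prod (μ := μ) (ν := ν) s t
  rcases ENNReal.mul_lt_top_iff.1 (hmul ▸ hst) with ⟨hμs, hνt⟩ | hμs | hνt
  · rw [← L2.inner_indicatorConstLp_one (𝕜 := 𝕜) (hs.prod ht) hst.ne,
      ← elemTensor_indicatorConstLp hs ht hμs.ne hνt.ne hst.ne, hF]
  · exact setIntegral_measure_zero _ (by rw [hmul, hμs, zero_mul])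
  · exact setIntegral_measure_zero _ (by rw [hmul, hνt, mul_zero])

theorem denseRange_tensorIsometry [SigmaFinite ν] : DenseRange (tensorIsometry 𝕜 μ ν) := by
  change Dense ((tensorIsometry 𝕜 μ ν).range : Set (Lp 𝕜 2 (μ.prod ν)))
  rw [Submodule.dense_iff_topologicalClosure_eq_top, Submodule.topologicalClosure_eq_top_iff,
    Submodule.eq_bot_iff]
  exact fun F hF ↦ eq_zero_of_inner_elemTensor_eq_zero fun g ξ ↦ hF _ ⟨g ⊗ₜ ξ, rfl⟩

end SigmaFinite

end L2Tensor

theorem stmt12_general {𝕜 X Y ι : Type*} [RCLike 𝕜] [MeasurableSpace X] [MeasurableSpace Y]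
    (μ : Measure X) (ν : Measure Y) [SigmaFinite μ] [SigmaFinite ν] (l : Filter ι)
    (ξ₀ : Lp 𝕜 2 ν) (hξ₀ : ‖ξ₀‖ = 1)
    (Θ : Lp 𝕜 2 ν → Lp 𝕜 2 (μ.prod ν) →L[𝕜] Lp 𝕜 2 (μ.prod ν))
    (hΘ : ∀ η F, Θ η F =ᵐ[μ.prod ν] fun z ↦ η z.2 * ∫ y, F (z.1, y) * conj (ξ₀ y) ∂ν)
    (v : ι → Lp 𝕜 2 (μ.prod ν) →L[𝕜] Lp 𝕜 2 (μ.prod ν)) (hbdd : ∃ C, ∀ i, ‖v i‖ ≤ C)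
    (hcomm : ∀ η F, Tendsto (fun i ↦ ‖v i (Θ η F) - Θ η (v i F)‖) l (𝓝 0))
    (hcomm' : ∀ η F, Tendsto (fun i ↦ ‖adjoint (v i) (Θ η F) - Θ η (adjoint (v i) F)‖) l (𝓝 0))
    (T : Lp 𝕜 2 μ → Lp 𝕜 2 ν → Lp 𝕜 2 (μ.prod ν))
    (hT : ∀ g ξ, T g ξ =ᵐ[μ.prod ν] fun z ↦ g z.1 * ξ z.2) :
    ∃ w : ι → Lp 𝕜 2 μ →L[𝕜] Lp 𝕜 2 μ,
      (∀ i g, w i g =ᵐ[μ] fun x ↦ ∫ y, v i (T g ξ₀) (x, y) * conj (ξ₀ y) ∂ν) ∧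
      (∀ i, ‖w i‖ ≤ ‖v i‖) ∧
      ∃ W : ι → Lp 𝕜 2 (μ.prod ν) →L[𝕜] Lp 𝕜 2 (μ.prod ν),
        (∀ i g ξ, W i (T g ξ) = T (w i g) ξ) ∧
        (∀ F, Tendsto (fun i ↦ ‖v i F - W i F‖) l (𝓝 0)) ∧
        ∀ F, Tendsto (fun i ↦ ‖adjoint (v i) F - adjoint (W i) F‖) l (𝓝 0) := by
  let U := tensorIsometry 𝕜 μ ν
  have hU : DenseRange U := denseRange_tensorIsometry
  obtain rfl : (fun g ξ ↦ U (g ⊗ₜ ξ)) = T :=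
    funext₂ fun g ξ ↦ elemTensor_eq_of_ae_eq (hT g ξ)
  obtain rfl : (fun η ↦ amplifyRankOne U η ξ₀) = Θ :=
    funext fun η ↦ ContinuousLinearMap.ext fun F ↦
      Lp.ext ((amplifyRankOne_tensorIsometry η ξ₀ F).trans (hΘ η F).symm)
  simp only [← tendsto_zero_iff_norm_tendsto_zero] at hcomm hcomm' ⊢
  refine ⟨fun i ↦ compression U ξ₀ (v i), fun i g ↦ adjoint_tensorRight_tensorIsometry ξ₀ _,
    fun i ↦ by simpa only [hξ₀, one_pow, one_mul] using norm_compression_le ξ₀ (v i),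
    fun i ↦ amplify U (compression U ξ₀ (v i)), fun i g ξ ↦ amplify_tmul hU _ g ξ,
    tendsto_sub_amplify_compression hU hbdd hξ₀ hcomm, ?_⟩
  have hbdd' : ∃ C, ∀ i, ‖adjoint (v i)‖ ≤ C := by
    simpa only [LinearIsometryEquiv.norm_map] using hbdd
  simpa only [compression_adjoint, amplify_adjoint hU] using
    tendsto_sub_amplify_compression hU hbdd' hξ₀ hcomm'

/-- Let `(X, μ)` be a σ-finite measure space and `H = L²(X × ℝ)`.  Let
`Θ μ' ξ` denote the amplification `1 ⊗ (h ↦ ⟨h, ξ⟩ μ')` of a rank-one operator of `L²(ℝ)`,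
i.e. `(Θ μ' ξ F)(x, t) = μ'(t) ∫ F(x, r) conj(ξ(r)) dr`, and let `T g ξ` denote the elementary
tensor `(g ⊗ ξ)(x, t) = g(x) ξ(t)` in `H`.  If `(v_n)` is a uniformly bounded sequence of
operators on `H` such that `[v_n, Θ μ' ξ] → 0` and `[v_n*, Θ μ' ξ] → 0` strongly for all
`μ', ξ ∈ L²(ℝ)`, and `ξ₀` is a unit vector of `L²(ℝ)`, then the compressions
`(w_n g)(x) = ∫ (v_n (g ⊗ ξ₀))(x, r) conj(ξ₀(r)) dr` are bounded operators on `L²(X, μ)` with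
`‖w_n‖ ≤ ‖v_n‖`, the fiberwise operators `w_n ⊗ 1` (determined by
`(w_n ⊗ 1)(g ⊗ ξ) = (w_n g) ⊗ ξ`) are bounded on `H`, and `v_n - w_n ⊗ 1 → 0` and
`v_n* - w_n* ⊗ 1 → 0` in the strong operator topology. -/
theorem stmt12 {X : Type*} [MeasurableSpace X] (μ : Measure X) [SigmaFinite μ]
    (Θ : Lp ℂ 2 (volume : Measure ℝ) → Lp ℂ 2 (volume : Measure ℝ) →
      (Lp ℂ 2 (μ.prod (volume : Measure ℝ)) →L[ℂ] Lp ℂ 2 (μ.prod (volume : Measure ℝ))))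
    (hΘ : ∀ (μ' ξ : Lp ℂ 2 (volume : Measure ℝ))
        (F : Lp ℂ 2 (μ.prod (volume : Measure ℝ))),
      (Θ μ' ξ F : X × ℝ → ℂ) =ᵐ[μ.prod (volume : Measure ℝ)]
        fun p => (μ' : ℝ → ℂ) p.2 *
          ∫ r : ℝ, (F : X × ℝ → ℂ) (p.1, r) * (starRingEnd ℂ) ((ξ : ℝ → ℂ) r) ∂volume)
    (v : ℕ → (Lp ℂ 2 (μ.prod (volume : Measure ℝ)) →L[ℂ] Lp ℂ 2 (μ.prod (volume : Measure ℝ))))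
    (hbdd : ∃ C : ℝ, ∀ n : ℕ, ‖v n‖ ≤ C)
    (hcomm : ∀ (μ' ξ : Lp ℂ 2 (volume : Measure ℝ))
        (F : Lp ℂ 2 (μ.prod (volume : Measure ℝ))),
      Tendsto (fun n : ℕ => ‖v n (Θ μ' ξ F) - Θ μ' ξ (v n F)‖) atTop (𝓝 0))
    (hcomm' : ∀ (μ' ξ : Lp ℂ 2 (volume : Measure ℝ))
        (F : Lp ℂ 2 (μ.prod (volume : Measure ℝ))),
      Tendsto (fun n : ℕ =>
        ‖ContinuousLinearMap.adjoint (v n) (Θ μ' ξ F) -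
          Θ μ' ξ (ContinuousLinearMap.adjoint (v n) F)‖) atTop (𝓝 0))
    (ξ₀ : Lp ℂ 2 (volume : Measure ℝ)) (hξ₀ : ‖ξ₀‖ = 1)
    (T : Lp ℂ 2 μ → Lp ℂ 2 (volume : Measure ℝ) → Lp ℂ 2 (μ.prod (volume : Measure ℝ)))
    (hT : ∀ (g : Lp ℂ 2 μ) (ξ : Lp ℂ 2 (volume : Measure ℝ)),
      (T g ξ : X × ℝ → ℂ) =ᵐ[μ.prod (volume : Measure ℝ)]
        fun p => (g : X → ℂ) p.1 * (ξ : ℝ → ℂ) p.2) :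
    ∃ w : ℕ → (Lp ℂ 2 μ →L[ℂ] Lp ℂ 2 μ),
      (∀ (n : ℕ) (g : Lp ℂ 2 μ), (w n g : X → ℂ) =ᵐ[μ]
        fun x => ∫ r : ℝ, (v n (T g ξ₀) : X × ℝ → ℂ) (x, r) *
          (starRingEnd ℂ) ((ξ₀ : ℝ → ℂ) r) ∂volume) ∧
      (∀ n : ℕ, ‖w n‖ ≤ ‖v n‖) ∧
      ∃ W : ℕ → (Lp ℂ 2 (μ.prod (volume : Measure ℝ)) →L[ℂ]
          Lp ℂ 2 (μ.prod (volume : Measure ℝ))),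
        (∀ (n : ℕ) (g : Lp ℂ 2 μ) (ξ : Lp ℂ 2 (volume : Measure ℝ)),
          W n (T g ξ) = T (w n g) ξ) ∧
        (∀ F : Lp ℂ 2 (μ.prod (volume : Measure ℝ)),
          Tendsto (fun n : ℕ => ‖v n F - W n F‖) atTop (𝓝 0)) ∧
        (∀ F : Lp ℂ 2 (μ.prod (volume : Measure ℝ)),
          Tendsto (fun n : ℕ => ‖ContinuousLinearMap.adjoint (v n) F -
            ContinuousLinearMap.adjoint (W n) F‖) atTop (𝓝 0)) := by
  exact stmt12_general μ volume atTop ξ₀ hξ₀ (Θ · ξ₀) (hΘ · ξ₀) v hbdd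
    (hcomm · ξ₀) (hcomm' · ξ₀) T hT
end

section
/- Let H be a complex Hilbert space and M a von Neumann algebra on H which is a factor, i.e. every element of M commuting with all elements of M is a complex scalar multiple of the identity. Let β : M → M be a *-algebra automorphism of M, and suppose there exists a ∈ M with a ≠ 0 such that β(y) · a = a · y for all y ∈ M. Then β is inner: there exists a unitary u ∈ M such that β(y) = u y u* for all y ∈ M. -/
/-!
If `a` intertwines a `*`-preserving surjection `β` with the identity, then `star a` intertwines in
the opposite direction, so `star a * a` and `a * star a` are central. They are therefore scalars,
and positivity together with the C⋆-identity forces both to be `‖a‖ ^ 2`; thus `‖a‖⁻¹ • a` is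
a unitary, and it implements `β`.
-/

theorem semiconjBy_star_left_iff {R : Type*} [Mul R] [StarMul R] {a y z : R} :
    SemiconjBy (star a) z y ↔ SemiconjBy a (star y) (star z) := by
  rw [← semiconjBy_star_star_star, star_star]

theorem isCentral_of_forall_commute_exists_eq_smul_one {R A : Type*} [CommSemiring R] [StarRing R]
    [Semiring A] [StarRing A] [Algebra R A] [StarModule R A] {S : StarSubalgebra R A}
    (h : ∀ x : S, (∀ y : S, x * y = y * x) → ∃ c : R, (x : A) = c • (1 : A)) :
    Algebra.IsCentral R S where
  out x hx := by
    obtain ⟨c, hc⟩ := h x fun y ↦ (Subalgebra.mem_center_iff.mp hx y).symm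
    exact ⟨c, Subtype.ext (by simp [hc, Algebra.algebraMap_eq_smul_one])⟩

section CStarAlgebra

variable {A : Type*} [CStarAlgebra A]

open scoped ComplexOrder in
theorem eq_norm_sq_of_star_mul_self_eq_algebraMap [Nontrivial A] {a : A} {c : ℂ}
    (h : star a * a = algebraMap ℂ A c) : c = (‖a‖ : ℂ) ^ 2 := by
  let _ := CStarAlgebra.spectralOrder A
  have := CStarAlgebra.spectralOrderedRing A
  have c_mem_spectrum : c ∈ spectrum ℂ (star a * a) := by
    simp [h, spectrum.scalar_eq]
  have c_nonneg : 0 ≤ c := spectrum_nonneg_of_nonneg (star_mul_self_nonneg a) c_mem_spectrum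
  have norm_c : ‖c‖ = ‖a‖ ^ 2 := by
    rw [← norm_algebraMap' A c, ← h, CStarRing.norm_star_mul_self, sq]
  rw [Complex.eq_coe_norm_of_nonneg c_nonneg, norm_c, Complex.ofReal_pow]

variable {S : StarSubalgebra ℂ A} [Algebra.IsCentral ℂ S]

theorem star_mul_self_eq_norm_sq_smul_one {a : S} (ha : a ≠ 0)
    (hstar_mul : ∀ y, Commute (star a * a) y) : star a * a = (‖a‖ : ℂ) ^ 2 • (1 : S) := by
  have : Nontrivial A := nontrivial_of_ne (a : A) 0 (by simpa using ha)
  obtain ⟨c, hc⟩ := (Algebra.IsCentral.mem_center_iff ℂ).mp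
    (Subalgebra.mem_center_iff.mpr fun y ↦ (hstar_mul y).eq.symm)
  have hc_norm : c = (‖a‖ : ℂ) ^ 2 :=
    eq_norm_sq_of_star_mul_self_eq_algebraMap (congrArg Subtype.val hc)
  rw [hc, hc_norm, Algebra.algebraMap_eq_smul_one]

theorem inv_norm_smul_mem_unitary {a : S} (ha : a ≠ 0)
    (hstar_mul : ∀ y, Commute (star a * a) y) (hmul_star : ∀ y, Commute (a * star a) y) :
    (‖a‖⁻¹ : ℂ) • a ∈ unitary S := by
  have norm_a_ne_zero : (‖a‖ : ℂ) ≠ 0 := by simp [ha]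
  have star_mul_self : star a * a = (‖a‖ : ℂ) ^ 2 • (1 : S) :=
    star_mul_self_eq_norm_sq_smul_one ha hstar_mul
  have mul_star_self : a * star a = (‖a‖ : ℂ) ^ 2 • (1 : S) := by
    simpa only [star_star, norm_star] using
      star_mul_self_eq_norm_sq_smul_one (star_ne_zero.mpr ha) (by simpa only [star_star])
  have star_inv_norm : star (‖a‖⁻¹ : ℂ) = (‖a‖⁻¹ : ℂ) := by simp
  have scale : (‖a‖⁻¹ : ℂ) * (‖a‖⁻¹ : ℂ) * (‖a‖ : ℂ) ^ 2 = 1 := by field_simp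
  rw [Unitary.mem_iff]
  constructor
  · rw [star_smul, star_inv_norm, smul_mul_smul_comm, star_mul_self, smul_smul, scale, one_smul]
  · rw [star_smul, star_inv_norm, smul_mul_smul_comm, mul_star_self, smul_smul, scale, one_smul]

theorem stmt13_general {F : Type*} [FunLike F S S] [StarHomClass F S S] {β : F}
    (hβ : Function.Surjective β) {a : S} (ha : a ≠ 0) (hab : ∀ y, SemiconjBy a y (β y)) :
    ∃ u ∈ unitary S, ∀ y, β y = u * y * star u := by
  have star_intertwines (y : S) : SemiconjBy (star a) (β y) y :=
    semiconjBy_star_left_iff.mpr (by simpa only [map_star] using hab (star y))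
  have commute_star_mul_self (y : S) : Commute (star a * a) y :=
    (star_intertwines y).mul_left (hab y)
  have commute_mul_star_self : ∀ y, Commute (a * star a) y :=
    hβ.forall.mpr fun y ↦ (hab y).mul_left (star_intertwines y)
  have unitary_mem : (‖a‖⁻¹ : ℂ) • a ∈ unitary S :=
    inv_norm_smul_mem_unitary ha commute_star_mul_self commute_mul_star_self
  refine ⟨_, unitary_mem, fun y ↦ ?_⟩
  have smul_intertwines : (‖a‖⁻¹ : ℂ) • a * y = β y * (‖a‖⁻¹ : ℂ) • a := by
    rw [smul_mul_assoc, mul_smul_comm, (hab y).eq]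
  rw [smul_intertwines, mul_assoc, Unitary.mul_star_self_of_mem unitary_mem, mul_one]

end CStarAlgebra

/-- Let `M` be a von Neumann algebra on a complex Hilbert space `H` which is a
factor (every element of `M` commuting with all of `M` is a scalar multiple of the identity).
If `β` is a `*`-algebra automorphism of `M` and there is a nonzero `a ∈ M` with
`β(y) * a = a * y` for all `y ∈ M`, then `β` is inner: `β(y) = u * y * u*` for a unitary
`u ∈ M`. -/
theorem stmt13 {H : Type*} [NormedAddCommGroup H] [InnerProductSpace ℂ H] [CompleteSpace H]
    (M : VonNeumannAlgebra H)
    (hfactor : ∀ x : M.toStarSubalgebra, (∀ y : M.toStarSubalgebra, x * y = y * x) →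
      ∃ c : ℂ, (x : H →L[ℂ] H) = c • (1 : H →L[ℂ] H))
    (β : M.toStarSubalgebra ≃⋆ₐ[ℂ] M.toStarSubalgebra)
    (a : M.toStarSubalgebra) (ha : a ≠ 0)
    (hab : ∀ y : M.toStarSubalgebra, (β y) * a = a * y) :
    ∃ u : M.toStarSubalgebra, star u * u = 1 ∧ u * star u = 1 ∧
      ∀ y : M.toStarSubalgebra, β y = u * y * star u := by
  have := isCentral_of_forall_commute_exists_eq_smul_one hfactor
  obtain ⟨u, hu, hβu⟩ := stmt13_general (EquivLike.surjective β) ha fun y ↦ (hab y).symm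
  exact ⟨u, Unitary.star_mul_self_of_mem hu, Unitary.mul_star_self_of_mem hu, hβu⟩
end
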